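/- arXiv:2310.05328 — 3 statements merged into one kernel-verified Lean document; each statement's English description precedes it below -/
import Mathlib

section
/- There exists an absolute constant C > 0 such that for every n ≥ 1, all real numbers y_1, …, y_n, and all integers 1 ≤ k < ℓ ≤ n, one has |S_ℓ(y)|^(1/ℓ) ≤ C · (k/ℓ)^(1/2) · max( |S_k(y)|^(1/k), |S_{k+1}(y)|^(1/(k+1)) ). -/
open Finset Real

/-- The non-normalized elementary symmetric function `S_m(y)`. -/
noncomputable def esymmS (n m : ℕ) (y : Fin n → ℝ) : ℝ :=
  ∑ A ∈ powersetCard m (univ : Finset (Fin n)), ∏ i ∈ A, y i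

/-- The elementary symmetric mean `s_m(y) = S_m(y) / binom(n,m)`. -/
noncomputable def smean (n m : ℕ) (y : Fin n → ℝ) : ℝ :=
  esymmS n m y / (n.choose m)

/-! Since `∏ i, (1 + y i * X)` is real-rooted, differentiation and reflection show that the Jensen
polynomial of every window `a, …, a + d` of the means `s m` of `y` is real-rooted. A real-rooted
polynomial is large on the imaginary axis, because there the squared modulus of each factor is
`r ^ 2 + x ^ 2`, and the product of these sums is bounded below in terms of the product of the
`x ^ 2` by weighted AM-GM. By the triangle inequality the value there is at most that of the
polynomial with coefficients built from `|s m|`, so inside a window the `|s m|` cannot all be much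
smaller than at both ends.

This is applied at two scales. After rescaling `y`, the weight `s m ^ 2 / m !` attains its maximum
over `[0, l]` on both sides of the gap `(k, k + 1)`, along a supporting line of a Newton polygon.
There is then an index `m > k` comparable to `k` at which this weight is still within a factor
`exp (O(k))` of its maximum. Starting from there, windows around the gap are shrunk until an
endpoint is `k` or `k + 1`, at the cost of a constant factor per unit of length. So one of `|s k|`,
`|s (k + 1)|` is within `exp (O(k))` of extremal; taking roots turns this into an absolute constant,
and the weight `m !` into the factor `√(l / k)`. -/

open Polynomial

section RealRooted

lemma splits_derivative {p : ℝ[X]} (hp : p.Splits) : (derivative p).Splits := by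
  rw [splits_iff_card_roots] at hp ⊢
  have hle := card_roots_le_derivative p
  have hcard := card_roots' (derivative p)
  have hdeg := natDegree_derivative_le p
  lia

lemma splits_reverse {K : Type*} [Field K] {p : K[X]} (hp : p.Splits) : p.reverse.Splits := by
  rw [hp.eq_prod_roots, reverse_mul_of_domain, reverse_C]
  refine (Splits.C _).mul <| Multiset.prod_induction (fun f : K[X] ↦ f.reverse.Splits) _
    (fun f g hf hg ↦ by simpa only [reverse_mul_of_domain] using hf.mul hg)
    (by simpa only [← C_1, reverse_C] using Splits.C (1 : K)) ?_
  simp only [Multiset.mem_map]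
  rintro _ ⟨a, -, rfl⟩
  exact .of_natDegree_le_one ((reverse_natDegree_le _).trans (natDegree_X_sub_C_le a))

lemma splits_reflect {K : Type*} [Field K] {p : K[X]} {N : ℕ} (hp : p.Splits)
    (hN : p.natDegree ≤ N) : (p.reflect N).Splits := by
  obtain ⟨e, rfl⟩ := Nat.exists_eq_add_of_le hN
  have key : p.reflect (p.natDegree + e) = p.reverse * X ^ e := by
    simpa only [mul_one, reflect_one, reverse] using
      reflect_mul p 1 le_rfl (natDegree_one.trans_le (Nat.zero_le e))
  exact key ▸ (splits_reverse hp).mul (.X_pow e)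

lemma normSq_aeval_mul_I {p : ℝ[X]} (hp : p.Splits) (r : ℝ) :
    Complex.normSq (aeval (r * Complex.I) p) =
      p.leadingCoeff ^ 2 * (p.roots.map fun x ↦ r ^ 2 + x ^ 2).prod := by
  conv_lhs => rw [hp.eq_prod_roots]
  rw [map_mul, map_mul, map_multiset_prod, map_multiset_prod, Multiset.map_map, Multiset.map_map]
  congr 1
  · simp [Complex.normSq_apply, sq]
  · congr 1
    refine Multiset.map_congr rfl fun x _ ↦ ?_
    simp only [Function.comp_apply, aeval_sub, aeval_X, aeval_C, Complex.coe_algebraMap,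
      Complex.normSq_apply, Complex.sub_re, Complex.sub_im,
      Complex.re_ofReal_mul, Complex.im_ofReal_mul, Complex.I_re, Complex.I_im,
      Complex.ofReal_re, Complex.ofReal_im]
    ring

lemma mul_rpow_prod_div_pow_card_le_prod_map_add {ρ G : ℝ} (hρ : 0 ≤ ρ) (hG : 0 < G)
    {m : Multiset ℝ} (hm : ∀ x ∈ m, 0 ≤ x) :
    (ρ + G) ^ m.card * (m.prod / G ^ m.card) ^ (G / (ρ + G)) ≤ (m.map (ρ + ·)).prod := by
  induction m using Multiset.induction_on with
  | empty => simp
  | cons x m ih =>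
    obtain ⟨hx, hm⟩ := Multiset.forall_mem_cons.1 hm
    have hprod : 0 ≤ m.prod := Multiset.prod_nonneg hm
    have hfactor : (ρ + G) * (x / G) ^ (G / (ρ + G)) ≤ ρ + x := by
      have amgm := geom_mean_le_arith_mean2_weighted (w₁ := ρ / (ρ + G)) (w₂ := G / (ρ + G))
        (p₁ := 1) (p₂ := x / G) (by positivity) (by positivity) zero_le_one (by positivity)
        (by field_simp)
      rw [one_rpow, one_mul] at amgm
      calc (ρ + G) * (x / G) ^ (G / (ρ + G))
          ≤ (ρ + G) * (ρ / (ρ + G) * 1 + G / (ρ + G) * (x / G)) := by gcongr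
        _ = ρ + x := by field_simp
    rw [Multiset.card_cons, Multiset.prod_cons, Multiset.map_cons, Multiset.prod_cons]
    calc (ρ + G) ^ (m.card + 1) * (x * m.prod / G ^ (m.card + 1)) ^ (G / (ρ + G))
        = ((ρ + G) * (x / G) ^ (G / (ρ + G))) *
            ((ρ + G) ^ m.card * (m.prod / G ^ m.card) ^ (G / (ρ + G))) := by
          rw [pow_succ' G, mul_div_mul_comm, mul_rpow (by positivity) (by positivity)]
          ring
      _ ≤ (ρ + x) * (m.map (ρ + ·)).prod := by
          gcongr
          exact ih hm

lemma pow_card_mul_prod_le_prod_map_add {ρ G : ℝ} (hρ : 0 ≤ ρ) (hG : 0 < G)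
    {m : Multiset ℝ} (hm : ∀ x ∈ m, 0 ≤ x) (hprod : m.prod ≤ G ^ m.card) :
    (ρ + G) ^ m.card * m.prod ≤ G ^ m.card * (m.map (ρ + ·)).prod := by
  have hratio : m.prod / G ^ m.card ≤ (m.prod / G ^ m.card) ^ (G / (ρ + G)) :=
    self_le_rpow_of_le_one (div_nonneg (Multiset.prod_nonneg hm) (by positivity))
      (div_le_one_of_le₀ hprod (by positivity)) (div_le_one_of_le₀ (by linarith) (by positivity))
  calc (ρ + G) ^ m.card * m.prod
      = G ^ m.card * ((ρ + G) ^ m.card * (m.prod / G ^ m.card)) := by field_simp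
    _ ≤ G ^ m.card * ((ρ + G) ^ m.card * (m.prod / G ^ m.card) ^ (G / (ρ + G))) := by gcongr
    _ ≤ G ^ m.card * (m.map (ρ + ·)).prod := by
      gcongr
      exact mul_rpow_prod_div_pow_card_le_prod_map_add hρ hG hm

lemma coeff_zero_sq_mul_le_normSq_aeval_mul_I {p : ℝ[X]} (hp : p.Splits) {N : ℕ}
    (hN : p.natDegree ≤ N) {t : ℝ} (ht : 0 < t) (u : ℝ)
    (hcoeff : |p.coeff 0| ≤ t ^ N * |p.coeff N|) :
    p.coeff 0 ^ 2 * (1 + u ^ 2) ^ N ≤ Complex.normSq (aeval ((t * u : ℝ) * Complex.I) p) := by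
  rcases eq_or_ne (p.coeff N) 0 with hlead | hlead
  · have : p.coeff 0 = 0 := by simpa [hlead] using hcoeff
    simpa [this] using Complex.normSq_nonneg _
  obtain rfl : p.natDegree = N := hN.antisymm (le_natDegree_of_ne_zero hlead)
  set squares := p.roots.map (· ^ 2) with hsquares
  have hcard : squares.card = p.natDegree := by
    rw [hsquares, Multiset.card_map, splits_iff_card_roots.1 hp]
  have hprod : p.coeff 0 ^ 2 = p.leadingCoeff ^ 2 * squares.prod := by
    simpa [hsquares, ← coeff_zero_eq_aeval_zero', Complex.normSq_ofReal, ← sq]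
      using normSq_aeval_mul_I hp 0
  have hbound : squares.prod ≤ (t ^ 2) ^ squares.card := by
    have hlead' : 0 < p.leadingCoeff ^ 2 := by positivity
    refine le_of_mul_le_mul_left ?_ hlead'
    calc p.leadingCoeff ^ 2 * squares.prod
        = |p.coeff 0| ^ 2 := by rw [← hprod, sq_abs]
      _ ≤ (t ^ p.natDegree * |p.leadingCoeff|) ^ 2 := by gcongr; exact hcoeff
      _ = p.leadingCoeff ^ 2 * (t ^ 2) ^ squares.card := by rw [mul_pow, sq_abs, hcard]; ring
  have hsq : ∀ x ∈ squares, 0 ≤ x := by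
    simp only [hsquares, Multiset.mem_map]
    rintro _ ⟨x, -, rfl⟩
    positivity
  have hmahler := pow_card_mul_prod_le_prod_map_add (sq_nonneg (t * u)) (sq_pos_of_pos ht)
    hsq hbound
  rw [normSq_aeval_mul_I hp, hprod, mul_assoc]
  gcongr
  have ht2 : 0 < (t ^ 2) ^ p.natDegree := by positivity
  refine le_of_mul_le_mul_left ?_ ht2
  calc (t ^ 2) ^ p.natDegree * (squares.prod * (1 + u ^ 2) ^ p.natDegree)
      = ((t * u) ^ 2 + t ^ 2) ^ squares.card * squares.prod := by
        rw [hcard, show (t * u) ^ 2 + t ^ 2 = t ^ 2 * (1 + u ^ 2) by ring, mul_pow]; ring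
    _ ≤ (t ^ 2) ^ p.natDegree * (p.roots.map fun x ↦ (t * u) ^ 2 + x ^ 2).prod := by
        rw [← hcard]
        simpa only [hsquares, Multiset.map_map, Function.comp_def] using hmahler

end RealRooted

section JensenPoly

variable {R : Type*} [CommSemiring R]

/-- The Jensen polynomial of degree `d` and shift `a` of the sequence `c`; the binomial weights make
differentiation a shift of the sequence. -/
noncomputable def jensenPoly (c : ℕ → R) (d a : ℕ) : R[X] :=
  ∑ j ∈ range (d + 1), monomial j (d.choose j * c (a + j))

lemma jensenPoly_congr {c c' : ℕ → R} {d a a' : ℕ} (h : ∀ j ≤ d, c (a + j) = c' (a' + j)) :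
    jensenPoly c d a = jensenPoly c' d a' :=
  sum_congr rfl fun j hj ↦ by rw [h j (mem_range_succ_iff.1 hj)]

lemma coeff_jensenPoly (c : ℕ → R) (d a j : ℕ) :
    (jensenPoly c d a).coeff j = d.choose j * c (a + j) := by
  simp only [jensenPoly, finsetSum_coeff, coeff_monomial, sum_ite_eq', mem_range]
  split_ifs with hj
  · rfl
  · rw [Nat.choose_eq_zero_of_lt (by lia), Nat.cast_zero, zero_mul]

lemma natDegree_jensenPoly_le (c : ℕ → R) (d a : ℕ) : (jensenPoly c d a).natDegree ≤ d :=
  natDegree_le_iff_coeff_eq_zero.2 fun j hj ↦ by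
    rw [coeff_jensenPoly, Nat.choose_eq_zero_of_lt hj, Nat.cast_zero, zero_mul]

lemma eval_jensenPoly (c : ℕ → R) (d a : ℕ) (x : R) :
    (jensenPoly c d a).eval x = ∑ j ∈ range (d + 1), d.choose j * c (a + j) * x ^ j := by
  simp only [jensenPoly, eval_finsetSum, eval_monomial]

lemma derivative_jensenPoly_succ (c : ℕ → R) (d a : ℕ) :
    derivative (jensenPoly c (d + 1) a) = C (d + 1 : R) * jensenPoly c d (a + 1) := by
  ext j
  have hchoose : (d + 1 : R) * d.choose j = (d + 1).choose (j + 1) * (j + 1) := by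
    exact_mod_cast congrArg (Nat.cast (R := R)) (Nat.add_one_mul_choose_eq d j)
  rw [coeff_derivative, coeff_C_mul, coeff_jensenPoly, coeff_jensenPoly, ← mul_assoc, hchoose,
    add_right_comm, add_assoc a]
  ring

lemma reflect_jensenPoly (c : ℕ → R) (d a : ℕ) :
    (jensenPoly c d a).reflect d = jensenPoly (fun m ↦ c (a + d - m)) d 0 := by
  ext j
  rw [coeff_reflect, coeff_jensenPoly, coeff_jensenPoly, zero_add]
  rcases le_or_gt j d with hj | hj
  · rw [revAt_le hj, Nat.choose_symm hj, Nat.add_sub_assoc hj]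
  · rw [revAt_eq_self_of_lt hj, Nat.choose_eq_zero_of_lt hj, Nat.cast_zero, zero_mul, zero_mul]

lemma eval_jensenPoly_mul_pow (c : ℕ → R) (t : R) (d a : ℕ) (x : R) :
    (jensenPoly (fun m ↦ c m * t ^ m) d a).eval x = t ^ a * (jensenPoly c d a).eval (t * x) := by
  simp only [eval_jensenPoly, mul_sum]
  refine sum_congr rfl fun j _ ↦ ?_
  ring

lemma splits_jensenPoly_add {c : ℕ → ℝ} {a d e : ℕ} (h : (jensenPoly c (d + e) a).Splits) :
    (jensenPoly c d (a + e)).Splits := by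
  induction e generalizing a with
  | zero => exact h
  | succ e ih =>
    have hderiv := splits_derivative h
    rw [← add_assoc, derivative_jensenPoly_succ] at hderiv
    rw [add_comm e, ← add_assoc]
    exact ih ((splits_mul_iff_right (C_ne_zero.2 (by positivity)) (.C _)).1 hderiv)

lemma splits_jensenPoly_of_add_le {c : ℕ → ℝ} {n a d : ℕ} (h : (jensenPoly c n 0).Splits)
    (hd : a + d ≤ n) : (jensenPoly c d a).Splits := by
  obtain ⟨e, rfl⟩ := Nat.exists_eq_add_of_le hd
  have hlow : (jensenPoly c (d + e) a).Splits := by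
    simpa using splits_jensenPoly_add (a := 0) (d := d + e) (e := a) (by convert h using 2; lia)
  have hreflect := splits_reflect hlow (natDegree_jensenPoly_le _ _ _)
  rw [reflect_jensenPoly] at hreflect
  have hdouble := splits_reflect (splits_jensenPoly_add hreflect) (natDegree_jensenPoly_le _ _ _)
  rw [reflect_jensenPoly] at hdouble
  have hseq : jensenPoly c d a = jensenPoly (fun m ↦ c (a + (d + e) - (0 + e + d - m))) d 0 :=
    jensenPoly_congr fun j hj ↦ by congr 1; lia
  rwa [hseq]

end JensenPoly

section JensenGrowth

/-- The growth estimate which Jensen polynomials of real-rooted sequences satisfy on the imaginary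
axis, recorded for the nonnegative sequence of absolute values: a window on which `s` does not drop
too much from its left to its right endpoint has a large Jensen polynomial. -/
structure HasJensenGrowth (s : ℕ → ℝ) (l : ℕ) : Prop where
  nonneg (m : ℕ) : 0 ≤ s m
  sq_mul_le {a d : ℕ} (had : a + d ≤ l) {t u : ℝ} (ht : 0 < t) (hu : 0 ≤ u)
    (hdrop : s a ≤ t ^ d * s (a + d)) :
    s a ^ 2 * (1 + u ^ 2) ^ d ≤ (jensenPoly s d a).eval (t * u) ^ 2

lemma norm_aeval_mul_I_jensenPoly_le (c : ℕ → ℝ) (d a : ℕ) {x : ℝ} (hx : 0 ≤ x) :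
    ‖aeval (x * Complex.I) (jensenPoly c d a)‖ ≤ (jensenPoly (fun m ↦ |c m|) d a).eval x := by
  rw [eval_jensenPoly, jensenPoly, map_sum]
  refine (norm_sum_le _ _).trans (sum_le_sum fun j _ ↦ ?_)
  simp [aeval_monomial, abs_of_nonneg hx]

lemma hasJensenGrowth_abs {c : ℕ → ℝ} {l : ℕ} (hc : (jensenPoly c l 0).Splits) :
    HasJensenGrowth (fun m ↦ |c m|) l where
  nonneg _ := abs_nonneg _
  sq_mul_le {a d} had {t u} ht hu hdrop := by
    have hwindow := coeff_zero_sq_mul_le_normSq_aeval_mul_I (splits_jensenPoly_of_add_le hc had)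
      (natDegree_jensenPoly_le c d a) ht u (by simpa [coeff_jensenPoly] using hdrop)
    simp only [coeff_jensenPoly, Nat.choose_zero_right, Nat.cast_one, one_mul, add_zero,
      Complex.normSq_eq_norm_sq] at hwindow
    rw [sq_abs]
    refine hwindow.trans ?_
    gcongr
    exact norm_aeval_mul_I_jensenPoly_le c d a (by positivity)

variable {s : ℕ → ℝ} {l : ℕ}

lemma HasJensenGrowth.mono (hs : HasJensenGrowth s l) {l' : ℕ} (hl : l' ≤ l) :
    HasJensenGrowth s l' :=
  ⟨hs.nonneg, fun had ↦ hs.sq_mul_le (had.trans hl)⟩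

lemma HasJensenGrowth.rescale (hs : HasJensenGrowth s l) {c : ℝ} (hc : 0 < c) :
    HasJensenGrowth (fun m ↦ s m * c ^ m) l where
  nonneg m := mul_nonneg (hs.nonneg m) (by positivity)
  sq_mul_le {a d} had {t u} ht hu hdrop := by
    have hca : 0 < c ^ a := by positivity
    have hdrop' : s a ≤ (c * t) ^ d * s (a + d) := by
      refine le_of_mul_le_mul_right (hdrop.trans_eq ?_) hca
      ring
    rw [eval_jensenPoly_mul_pow, mul_pow, mul_pow, mul_right_comm,
      mul_comm _ ((c ^ a) ^ 2), ← mul_assoc c]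
    gcongr
    exact hs.sq_mul_le had (by positivity) hu hdrop'

lemma HasJensenGrowth.eval_nonneg (hs : HasJensenGrowth s l) (d a : ℕ) {x : ℝ} (hx : 0 ≤ x) :
    0 ≤ (jensenPoly s d a).eval x := by
  rw [eval_jensenPoly]
  exact sum_nonneg fun j _ ↦ mul_nonneg (mul_nonneg (by positivity) (hs.nonneg _)) (by positivity)

end JensenGrowth

section SupportingLine

variable {u : ℕ → ℝ}

lemma exists_sup'_mul_pow_eq_sup'_mul_pow (hu : ∀ m, 0 ≤ u m) {S T : Finset ℕ} {a b : ℕ}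
    (ha : a ∈ S) (hb : b ∈ T) (haT : ∀ m ∈ T, a < m) (hbS : ∀ m ∈ S, m < b)
    (hua : 0 < u a) (hub : 0 < u b) :
    ∃ c, 0 < c ∧ S.sup' ⟨a, ha⟩ (fun m ↦ u m * c ^ m) = T.sup' ⟨b, hb⟩ (fun m ↦ u m * c ^ m) := by
  set F : ℝ → ℝ := fun c ↦ S.sup' ⟨a, ha⟩ fun m ↦ u m * c ^ m
  set G : ℝ → ℝ := fun c ↦ T.sup' ⟨b, hb⟩ fun m ↦ u m * c ^ m
  have hFcont : Continuous F := Continuous.finset_sup'_apply _ fun m _ ↦ by fun_prop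
  have hGcont : Continuous G := Continuous.finset_sup'_apply _ fun m _ ↦ by fun_prop
  set U : ℝ := ∑ m ∈ S ∪ T, u m
  have hle_sum : ∀ m ∈ S ∪ T, u m ≤ U := fun m hm ↦ single_le_sum (fun i _ ↦ hu i) hm
  have haU := hle_sum a (mem_union_left _ ha)
  have hbU := hle_sum b (mem_union_right _ hb)
  have hUpos : 0 < U := hua.trans_le haU
  have hsmall : G (u a / U) ≤ F (u a / U) := by
    refine (sup'_le _ _ fun m hm ↦ ?_).trans (le_sup' _ ha)
    calc u m * (u a / U) ^ m ≤ U * (u a / U) ^ (a + 1) :=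
          mul_le_mul (hle_sum m (mem_union_right _ hm))
            (pow_le_pow_of_le_one (by positivity) ((div_le_one hUpos).2 haU) (haT m hm))
            (by positivity) hUpos.le
      _ = u a * (u a / U) ^ a := by rw [pow_succ]; field_simp
  have hlarge : F (U / u b) ≤ G (U / u b) := by
    refine (sup'_le _ _ fun m hm ↦ ?_).trans (le_sup' _ hb)
    obtain ⟨b', rfl⟩ := Nat.exists_eq_succ_of_ne_zero (hbS m hm).ne_bot
    calc u m * (U / u (b' + 1)) ^ m ≤ U * (U / u (b' + 1)) ^ b' :=
          mul_le_mul (hle_sum m (mem_union_left _ hm))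
            (pow_le_pow_right₀ ((one_le_div hub).2 hbU) (Nat.lt_succ_iff.1 (hbS m hm)))
            (by positivity) hUpos.le
      _ = u (b' + 1) * (U / u (b' + 1)) ^ (b' + 1) := by rw [pow_succ]; field_simp
  obtain ⟨c, hc, hFG⟩ := isPreconnected_Ioi.intermediate_value₂ (a := u a / U) (b := U / u b)
    (s := Set.Ioi 0) (Set.mem_Ioi.2 (by positivity)) (Set.mem_Ioi.2 (by positivity))
    hGcont.continuousOn hFcont.continuousOn hsmall hlarge
  exact ⟨c, hc, hFG.symm⟩

/-- A supporting line of the Newton polygon of `u` over the gap `(k, k + 1)`, in multiplicative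
form: after the rescaling by `c ^ m` the line is horizontal. -/
lemma exists_supporting_line (hu : ∀ m, 0 ≤ u m) {a k b : ℕ} (hak : a ≤ k) (hkb : k < b)
    (hua : 0 < u a) (hub : 0 < u b) :
    ∃ c, 0 < c ∧ ∃ i ∈ Icc a k, ∃ j ∈ Icc (k + 1) b, u j * c ^ j = u i * c ^ i ∧
      ∀ m ∈ Icc a b, u m * c ^ m ≤ u i * c ^ i := by
  obtain ⟨c, hc, hsup⟩ := exists_sup'_mul_pow_eq_sup'_mul_pow hu (left_mem_Icc.2 hak)
    (right_mem_Icc.2 hkb) (fun m hm ↦ hak.trans_lt (mem_Icc.1 hm).1)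
    (fun m hm ↦ (mem_Icc.1 hm).2.trans_lt hkb) hua hub
  obtain ⟨i, hi, hi_eq⟩ := exists_mem_eq_sup' ⟨a, left_mem_Icc.2 hak⟩ fun m ↦ u m * c ^ m
  obtain ⟨j, hj, hj_eq⟩ := exists_mem_eq_sup' ⟨b, right_mem_Icc.2 hkb⟩ fun m ↦ u m * c ^ m
  refine ⟨c, hc, i, hi, j, hj, by rw [← hi_eq, hsup, hj_eq], fun m hm ↦ ?_⟩
  rw [← hi_eq]
  rw [mem_Icc] at hm
  rcases le_or_gt m k with hmk | hmk
  · exact le_sup' (fun m ↦ u m * c ^ m) (mem_Icc.2 ⟨hm.1, hmk⟩)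
  · exact hsup ▸ le_sup' (fun m ↦ u m * c ^ m) (mem_Icc.2 ⟨hmk, hm.2⟩)

end SupportingLine

section Descent

lemma sum_choose_mul_pow_add_pow_sub {R : Type*} [CommSemiring R] (d : ℕ) (x : R) :
    ∑ j ∈ range (d + 1), d.choose j * (x ^ j + x ^ (d - j)) = 2 * (1 + x) ^ d := by
  have hpow := add_pow x 1 d
  have hpow_sub := add_pow 1 x d
  simp only [one_pow, mul_one, one_mul] at hpow hpow_sub
  simp only [mul_comm (d.choose _ : R), add_mul, sum_add_distrib]
  rw [← hpow, ← hpow_sub, add_comm x, two_mul]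

variable {s : ℕ → ℝ} {l : ℕ}

lemma HasJensenGrowth.exists_interior_ge (hs : HasJensenGrowth s l) {a d : ℕ} (had : a + d ≤ l)
    (hd : 3 ≤ d) (hpos : 0 < s a) (heq : s (a + d) = s a) :
    ∃ j, 0 < j ∧ j < d ∧ s a * (9⁻¹ ^ j + 9⁻¹ ^ (d - j)) ≤ s (a + j) := by
  by_contra! hsmall
  have hterm : ∀ j ≤ d, s (a + j) ≤ s a * (9⁻¹ ^ j + 9⁻¹ ^ (d - j)) := by
    intro j hj
    rcases j.eq_zero_or_pos with rfl | hj0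
    · exact le_mul_of_one_le_right hpos.le (le_add_of_nonneg_right (by positivity))
    rcases hj.eq_or_lt with rfl | hjd
    · rw [heq, Nat.sub_self]
      exact le_mul_of_one_le_right hpos.le (le_add_of_nonneg_left (by positivity))
    · exact (hsmall j hj0 hjd).le
  have hupper : (jensenPoly s d a).eval 1 ≤ s a * (2 * (1 + 9⁻¹) ^ d) := by
    rw [eval_jensenPoly, ← sum_choose_mul_pow_add_pow_sub, mul_sum]
    refine sum_le_sum fun j hj ↦ ?_
    rw [one_pow, mul_one, mul_left_comm]
    gcongr
    exact hterm j (mem_range_succ_iff.1 hj)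
  have hlower := hs.sq_mul_le had (t := 1) (u := 1) one_pos zero_le_one (by simp [heq])
  rw [mul_one] at hlower
  have hgrowth : (81 / 50 : ℝ) ^ d ≤ 4 := by
    have hscale : 0 < s a ^ 2 * (100 / 81) ^ d := by positivity
    refine le_of_mul_le_mul_left ?_ hscale
    calc s a ^ 2 * (100 / 81) ^ d * (81 / 50) ^ d = s a ^ 2 * (1 + 1 ^ 2) ^ d := by
          rw [mul_assoc, ← mul_pow]; norm_num
      _ ≤ (s a * (2 * (1 + 9⁻¹) ^ d)) ^ 2 :=
          hlower.trans (pow_le_pow_left₀ (hs.eval_nonneg d a zero_le_one) hupper 2)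
      _ = s a ^ 2 * (100 / 81) ^ d * 4 := by
          rw [mul_pow, mul_pow, pow_right_comm]; norm_num; ring
  have hcube : (4 : ℝ) < (81 / 50) ^ d :=
    lt_of_lt_of_le (by norm_num) (pow_le_pow_right₀ (by norm_num) hd)
  exact hgrowth.not_gt hcube

lemma HasJensenGrowth.mul_pow_le_max_of_eq (hs : HasJensenGrowth s l) {k a d : ℕ} (hak : a ≤ k)
    (hkd : k < a + d) (hdl : a + d ≤ l) (hpos : 0 < s a) (heq : s (a + d) = s a)
    (ih : ∀ e < d, ∀ b g, b ≤ k → k < b + e → b + e ≤ l → 0 < g → g ≤ s b → g ≤ s (b + e) →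
      g * 9⁻¹ ^ e ≤ max (s k) (s (k + 1))) :
    s a * 9⁻¹ ^ d ≤ max (s k) (s (k + 1)) := by
  have hninth (e : ℕ) : (9⁻¹ : ℝ) ^ e ≤ 1 := pow_le_one₀ (by norm_num) (by norm_num)
  rcases hak.eq_or_lt with rfl | hak'
  · exact (mul_le_of_le_one_right hpos.le (hninth d)).trans (le_max_left _ _)
  rcases (show k + 1 ≤ a + d from hkd).eq_or_lt with hkd' | hkd'
  · rw [hkd', heq]
    exact (mul_le_of_le_one_right hpos.le (hninth d)).trans (le_max_right _ _)
  obtain ⟨j, hj0, hjd, hj⟩ := hs.exists_interior_ge hdl (by lia) hpos heq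
  have hleft : s a * 9⁻¹ ^ j ≤ s (a + j) :=
    le_trans (by gcongr; exact le_add_of_nonneg_right (by positivity)) hj
  have hright : s a * 9⁻¹ ^ (d - j) ≤ s (a + j) :=
    le_trans (by gcongr; exact le_add_of_nonneg_left (by positivity)) hj
  rcases le_or_gt (a + j) k with hjk | hjk
  · have hend : a + j + (d - j) = a + d := by lia
    have h := ih (d - j) (by lia) (a + j) (s a * 9⁻¹ ^ j) hjk (by lia) (by lia) (by positivity)
      hleft (by rw [hend, heq]; exact mul_le_of_le_one_right hpos.le (hninth j))
    rwa [mul_assoc, ← pow_add, Nat.add_sub_cancel' hjd.le] at h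
  · have h := ih j hjd a (s a * 9⁻¹ ^ (d - j)) hak hjk (by lia) (by positivity)
      (mul_le_of_le_one_right hpos.le (hninth _)) hright
    rwa [mul_assoc, ← pow_add, Nat.sub_add_cancel hjd.le] at h

lemma mul_pow_le_of_mul_pow_le_of_mul_pow_le {g c H : ℝ} {a b m : ℕ} (hg : 0 ≤ g) (hc : 0 < c)
    (ha : g * c ^ a ≤ H) (hb : g * c ^ b ≤ H) (ham : a ≤ m) (hmb : m ≤ b) : g * c ^ m ≤ H := by
  rcases le_total c 1 with hc1 | hc1
  · exact (mul_le_mul_of_nonneg_left (pow_le_pow_of_le_one hc.le hc1 ham) hg).trans ha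
  · exact (mul_le_mul_of_nonneg_left (pow_le_pow_right₀ hc1 hmb) hg).trans hb

lemma mul_le_of_mul_pow_le {g c H θ x : ℝ} {m : ℕ} (hc : 0 < c) (hθ : 0 ≤ θ)
    (hg : g * c ^ m ≤ H) (hx : H * θ ≤ x * c ^ m) : g * θ ≤ x := by
  have hcm : 0 < c ^ m := by positivity
  refine le_of_mul_le_mul_right ?_ hcm
  calc g * θ * c ^ m = g * c ^ m * θ := by ring
    _ ≤ H * θ := by gcongr
    _ ≤ x * c ^ m := hx

lemma HasJensenGrowth.mul_pow_le_max (hs : HasJensenGrowth s l) {k a d : ℕ} {g : ℝ} (hak : a ≤ k)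
    (hkd : k < a + d) (hdl : a + d ≤ l) (hg : 0 < g) (hga : g ≤ s a) (hgd : g ≤ s (a + d)) :
    g * 9⁻¹ ^ d ≤ max (s k) (s (k + 1)) := by
  induction d using Nat.strong_induction_on generalizing s a g with
  | _ d ih =>
  obtain ⟨c, hc, i, hi, j, hj, hij, hle⟩ := exists_supporting_line hs.nonneg hak hkd
    (hg.trans_le hga) (hg.trans_le hgd)
  rw [mem_Icc] at hi hj
  obtain ⟨e, rfl⟩ := Nat.exists_eq_add_of_le (hi.2.trans (Nat.le_of_succ_le hj.1))
  have hcu := hs.rescale hc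
  have ha_le : g * c ^ a ≤ s i * c ^ i :=
    (mul_le_mul_of_nonneg_right hga (by positivity)).trans (hle a (by simp))
  have hd_le : g * c ^ (a + d) ≤ s i * c ^ i :=
    (mul_le_mul_of_nonneg_right hgd (by positivity)).trans (hle (a + d) (by simp))
  have hline (m : ℕ) (ham : a ≤ m) (hmd : m ≤ a + d) : g * c ^ m ≤ s i * c ^ i :=
    mul_pow_le_of_mul_pow_le_of_mul_pow_le hg.le hc ha_le hd_le ham hmd
  have hpos : 0 < s i * c ^ i := lt_of_lt_of_le (by positivity) ha_le
  have hmax : s i * c ^ i * 9⁻¹ ^ d ≤ max (s k * c ^ k) (s (k + 1) * c ^ (k + 1)) := by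
    have hed : (9⁻¹ : ℝ) ^ d ≤ 9⁻¹ ^ e := pow_le_pow_of_le_one (by norm_num) (by norm_num) (by lia)
    refine (mul_le_mul_of_nonneg_left hed hpos.le).trans ?_
    exact hcu.mul_pow_le_max_of_eq hi.2 (by lia) (by lia) hpos hij fun e' he' b g' hbk hke hel ↦
      ih e' (by lia) hcu hbk hke hel
  exact le_max_iff.2 <| (le_max_iff.1 hmax).imp
    (mul_le_of_mul_pow_le hc (by positivity) (hline k hak hkd.le))
    (mul_le_of_mul_pow_le hc (by positivity) (hline (k + 1) (by lia) hkd))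

end Descent

section FactorialWeight

open scoped Nat

lemma pow_le_factorial_mul_three_pow (n m : ℕ) : (n : ℝ) ^ m ≤ m ! * 3 ^ n := by
  have hexp := pow_div_factorial_le_exp (n : ℝ) n.cast_nonneg m
  rw [div_le_iff₀' (by positivity), ← exp_one_pow] at hexp
  refine hexp.trans ?_
  gcongr
  exact exp_one_lt_three.le

lemma pow_div_factorial_le_three_pow (n m : ℕ) : (n : ℝ) ^ m / m ! ≤ 3 ^ n :=
  (div_le_iff₀' (by positivity)).2 (pow_le_factorial_mul_three_pow n m)

lemma two_pow_le_one_add_div_pow {p N : ℕ} (hp : p ≤ N) : (2 : ℝ) ^ p ≤ (1 + p / N) ^ N := by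
  rcases N.eq_zero_or_pos with rfl | hN
  · simp [Nat.le_zero.1 hp]
  have hbernoulli := rpow_one_add_le_one_add_mul_self (s := 1) (p := (p : ℝ) / N) (by norm_num)
    (by positivity) ((div_le_one (by positivity)).2 (by exact_mod_cast hp))
  rw [mul_one, one_add_one_eq_two] at hbernoulli
  calc (2 : ℝ) ^ p = ((2 : ℝ) ^ ((p : ℝ) / N)) ^ N := by
        rw [← rpow_natCast, ← rpow_natCast, ← rpow_mul zero_le_two,
          div_mul_cancel₀ _ (by positivity)]
    _ ≤ (1 + p / N) ^ N := by gcongr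

lemma factorial_le_three_div_pow_mul_factorial_add (a N : ℕ) :
    (a ! : ℝ) ≤ (3 / N) ^ N * (a + N)! := by
  rcases N.eq_zero_or_pos with rfl | hN
  · simp
  have hadd : (a ! * N ! : ℝ) ≤ (a + N)! := by
    exact_mod_cast Nat.le_of_dvd (Nat.factorial_pos _)
      (Nat.factorial_mul_factorial_dvd_factorial_add a N)
  rw [div_pow, div_mul_eq_mul_div, le_div_iff₀ (by positivity)]
  calc (a ! * N ^ N : ℝ) ≤ a ! * (N ! * 3 ^ N) := by
        gcongr
        exact pow_le_factorial_mul_three_pow N N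
    _ = 3 ^ N * (a ! * N !) := by ring
    _ ≤ 3 ^ N * (a + N)! := by gcongr

lemma choose_sq_mul_factorial_add_mul_pow_le {x : ℝ} (hx : 0 ≤ x) {N : ℕ} (hN : 0 < N) (a j : ℕ) :
    (N.choose j : ℝ) ^ 2 * (a + j)! * (x / N ^ 2) ^ j ≤ a ! * 2 ^ a * ((2 * x) ^ j / j !) := by
  have hadd : ((a + j)! : ℝ) ≤ 2 ^ (a + j) * (a ! * j !) := by
    rw [← Nat.add_choose_mul_factorial_mul_factorial a j]
    push_cast
    rw [mul_assoc]
    gcongr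
    exact_mod_cast Nat.choose_le_two_pow (a + j) j
  calc (N.choose j : ℝ) ^ 2 * (a + j)! * (x / N ^ 2) ^ j
      ≤ ((N : ℝ) ^ j / j !) ^ 2 * (2 ^ (a + j) * (a ! * j !)) * (x / N ^ 2) ^ j := by
        gcongr
        exact Nat.choose_le_pow_div j N
    _ = a ! * 2 ^ a * ((2 * x) ^ j / j !) := by
        rw [div_pow x, ← pow_mul, mul_comm 2 j, pow_mul, mul_pow 2 x, pow_add]
        field_simp

lemma pow_div_factorial_le_of_le {j k : ℕ} (hj : j ≤ k) :
    (384 * k : ℝ) ^ j / j ! ≤ 1152 ^ k := by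
  calc (384 * k : ℝ) ^ j / j ! = 384 ^ j * ((k : ℝ) ^ j / j !) := by rw [mul_pow, mul_div_assoc]
    _ ≤ 384 ^ k * 3 ^ k := by
        gcongr
        · norm_num
        · exact pow_div_factorial_le_three_pow k j
    _ = 1152 ^ k := by rw [← mul_pow]; norm_num

lemma pow_div_factorial_le_one {j k : ℕ} (hj : 1536 * k ≤ j) : (384 * k : ℝ) ^ j / j ! ≤ 1 := by
  have htwo : (0 : ℝ) < 2 ^ j := by positivity
  refine le_of_mul_le_mul_left ?_ htwo
  calc (2 : ℝ) ^ j * ((384 * k) ^ j / j !) = ((768 * k : ℕ) : ℝ) ^ j / j ! := by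
        rw [← mul_div_assoc, ← mul_pow]; push_cast; ring
    _ ≤ 3 ^ (768 * k) := pow_div_factorial_le_three_pow _ _
    _ ≤ 4 ^ (768 * k) := by gcongr; norm_num
    _ = 2 ^ (1536 * k) := by
        rw [show (4 : ℝ) = 2 ^ 2 by norm_num, ← pow_mul]
        congr 1
        lia
    _ ≤ 2 ^ j * 1 := by rw [mul_one]; gcongr; norm_num

/-- The weights `(384 k) ^ j / j !` exceed `1` only for `j < 1536 k`, where `w (a + j)` is small
enough to absorb them unless `a + j ≤ k`. -/
lemma mul_pow_div_factorial_le {w : ℕ → ℝ} {H : ℝ} (hH : 0 ≤ H) {k l a j : ℕ} (hk : 0 < k)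
    (hak : a ≤ k) (hjl : a + j ≤ l) (hle : ∀ m ≤ l, w m ≤ H)
    (hsmall : ∀ m, k < m → m ≤ 1538 * k → m ≤ l → w m ≤ H * 3⁻¹ ^ (384 * k)) :
    w (a + j) * ((384 * k) ^ j / j !) ≤ H * 1152 ^ k := by
  rcases le_or_gt (a + j) k with hjk | hjk
  · gcongr
    · exact hle _ hjl
    · exact pow_div_factorial_le_of_le (by lia)
  rcases le_or_gt (a + j) (1538 * k) with hjB | hjB
  · calc w (a + j) * ((384 * k) ^ j / j !)
        ≤ H * 3⁻¹ ^ (384 * k) * 3 ^ (384 * k) := by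
          gcongr
          · exact hsmall _ hjk hjB hjl
          · exact_mod_cast pow_div_factorial_le_three_pow (384 * k) j
      _ = H := by rw [mul_assoc, ← mul_pow]; norm_num
      _ ≤ H * 1152 ^ k := le_mul_of_one_le_right hH (one_le_pow₀ (by norm_num))
  · gcongr
    · exact hle _ hjl
    · exact (pow_div_factorial_le_one (by lia)).trans (one_le_pow₀ (by norm_num))

/-- The weight `s m ^ 2 / m !`, which is constant along the sequence `√(m !)` of extremal growth. A
supporting line of its Newton polygon provides the long window to which the growth estimate of
Jensen polynomials is first applied. -/
noncomputable def factorialWeight (s : ℕ → ℝ) (m : ℕ) : ℝ :=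
  s m ^ 2 / m !

lemma factorialWeight_nonneg (s : ℕ → ℝ) (m : ℕ) : 0 ≤ factorialWeight s m :=
  div_nonneg (sq_nonneg _) (by positivity)

lemma factorialWeight_mul_factorial (s : ℕ → ℝ) (m : ℕ) : factorialWeight s m * m ! = s m ^ 2 :=
  div_mul_cancel₀ _ (by positivity)

lemma factorialWeight_mul_pow (s : ℕ → ℝ) (c : ℝ) (m : ℕ) :
    factorialWeight (fun m ↦ s m * c ^ m) m = factorialWeight s m * (c ^ 2) ^ m := by
  rw [factorialWeight, factorialWeight]
  ring

variable {s : ℕ → ℝ} {l k a N : ℕ}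

lemma choose_mul_mul_pow_le (hs : ∀ m, 0 ≤ s m) (hk : 0 < k) (hak : a ≤ k) (hN : 0 < N)
    (hNl : a + N ≤ l) (hle : ∀ m ≤ l, factorialWeight s m ≤ factorialWeight s a)
    (hsmall : ∀ m, k < m → m ≤ 1538 * k → m ≤ l →
      factorialWeight s m ≤ factorialWeight s a * 3⁻¹ ^ (384 * k)) {j : ℕ} (hj : j ≤ N) :
    N.choose j * s (a + j) * (√(48 * k) / N) ^ j ≤ s a * 48 ^ k * 2⁻¹ ^ j := by
  have hsa := hs a
  refine le_of_pow_le_pow_left₀ two_ne_zero (by positivity) ?_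
  have hw := factorialWeight_nonneg s (a + j)
  have hwa := factorialWeight_nonneg s a
  calc (N.choose j * s (a + j) * (√(48 * k) / N) ^ j) ^ 2
      = factorialWeight s (a + j) *
          ((N.choose j : ℝ) ^ 2 * (a + j)! * (48 * k / N ^ 2) ^ j) := by
        rw [mul_pow, mul_pow, ← factorialWeight_mul_factorial s (a + j), pow_right_comm, div_pow,
          sq_sqrt (by positivity)]
        ring
    _ ≤ factorialWeight s (a + j) * (a ! * 2 ^ k * ((2 * (48 * k)) ^ j / j !)) := by
        refine mul_le_mul_of_nonneg_left
          ((choose_sq_mul_factorial_add_mul_pow_le (by positivity) hN a j).trans ?_) hw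
        gcongr
        exact one_le_two
    _ = a ! * 2 ^ k * 4⁻¹ ^ j * (factorialWeight s (a + j) * ((384 * k) ^ j / j !)) := by
        rw [show (2 * (48 * k) : ℝ) = 4⁻¹ * (384 * k) by ring, mul_pow]
        ring
    _ ≤ a ! * 2 ^ k * 4⁻¹ ^ j * (factorialWeight s a * 1152 ^ k) :=
        mul_le_mul_of_nonneg_left
          (mul_pow_div_factorial_le hwa hk hak (by lia) hle hsmall) (by positivity)
    _ = (s a * 48 ^ k * 2⁻¹ ^ j) ^ 2 := by
        rw [mul_pow, mul_pow, ← factorialWeight_mul_factorial, pow_right_comm, pow_right_comm _ j,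
          show (48 ^ 2 : ℝ) = 2 * 1152 by norm_num, mul_pow]
        ring

lemma eval_jensenPoly_le_of_factorialWeight_le (hs : ∀ m, 0 ≤ s m) (hk : 0 < k) (hak : a ≤ k)
    (hN : 0 < N) (hNl : a + N ≤ l) (hle : ∀ m ≤ l, factorialWeight s m ≤ factorialWeight s a)
    (hsmall : ∀ m, k < m → m ≤ 1538 * k → m ≤ l →
      factorialWeight s m ≤ factorialWeight s a * 3⁻¹ ^ (384 * k)) :
    (jensenPoly s N a).eval (√(48 * k) / N) ≤ s a * 48 ^ k * 2 := by
  have hsa := hs a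
  calc (jensenPoly s N a).eval (√(48 * k) / N)
      ≤ ∑ j ∈ range (N + 1), s a * 48 ^ k * 2⁻¹ ^ j := by
        rw [eval_jensenPoly]
        exact sum_le_sum fun j hj ↦
          choose_mul_mul_pow_le hs hk hak hN hNl hle hsmall (mem_range_succ_iff.1 hj)
    _ ≤ s a * 48 ^ k * 2 := by
        rw [← mul_sum]
        gcongr
        simpa only [one_div] using sum_geometric_two_le (N + 1)

lemma HasJensenGrowth.two_pow_le_eval_sq (hs : HasJensenGrowth s l) (hN : 0 < N)
    (hNl : a + N ≤ l) (hkN : 16 * k ≤ N)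
    (heq : factorialWeight s (a + N) = factorialWeight s a) :
    s a ^ 2 * 2 ^ (16 * k) ≤ (jensenPoly s N a).eval (√(48 * k) / N) ^ 2 := by
  have hdrop : s a ≤ √(3 / N) ^ N * s (a + N) := by
    refine le_of_pow_le_pow_left₀ two_ne_zero (mul_nonneg (by positivity) (hs.nonneg _)) ?_
    rw [mul_pow, pow_right_comm, sq_sqrt (by positivity), ← factorialWeight_mul_factorial,
      ← factorialWeight_mul_factorial, heq, mul_left_comm]
    exact mul_le_mul_of_nonneg_left (factorial_le_three_div_pow_mul_factorial_add a N)
      (factorialWeight_nonneg s a)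
  have hradius : √(3 / N) * √(16 * k / N) = √(48 * k) / N := by
    rw [← sqrt_mul (by positivity), ← sqrt_sq N.cast_nonneg, ← sqrt_div (by positivity),
      sqrt_sq N.cast_nonneg]
    congr 1
    field_simp
    ring
  have hgrowth := hs.sq_mul_le hNl (by positivity) (sqrt_nonneg (16 * k / N)) hdrop
  rw [hradius, sq_sqrt (by positivity)] at hgrowth
  refine le_trans ?_ hgrowth
  gcongr
  exact_mod_cast two_pow_le_one_add_div_pow hkN

lemma HasJensenGrowth.exists_factorialWeight_ge (hs : HasJensenGrowth s l) (hk : 0 < k)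
    (hak : a ≤ k) (hkN : k < a + N) (hNl : a + N ≤ l) (hpos : 0 < s a)
    (heq : factorialWeight s (a + N) = factorialWeight s a)
    (hle : ∀ m ≤ l, factorialWeight s m ≤ factorialWeight s a) :
    ∃ m, k < m ∧ m ≤ 1538 * k ∧ m ≤ l ∧
      factorialWeight s a * 3⁻¹ ^ (384 * k) ≤ factorialWeight s m := by
  by_contra! hsmall
  have hwa := factorialWeight_nonneg s a
  have hfar : 1538 * k < a + N := by
    by_contra! hnear
    refine (hsmall _ hkN hnear hNl).not_ge ?_
    rw [heq]
    exact mul_le_of_le_one_right hwa (pow_le_one₀ (by norm_num) (by norm_num))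
  have hlower := hs.two_pow_le_eval_sq (k := k) (by lia) hNl (by lia) heq
  have hupper := eval_jensenPoly_le_of_factorialWeight_le hs.nonneg hk hak (by lia) hNl hle
    fun m hkm hmB hml ↦ (hsmall m hkm hmB hml).le
  have hpow : (2 : ℝ) ^ (16 * k) ≤ 4 * 2304 ^ k := by
    have hsa : 0 < s a ^ 2 := by positivity
    refine le_of_mul_le_mul_left ?_ hsa
    calc s a ^ 2 * 2 ^ (16 * k) ≤ (s a * 48 ^ k * 2) ^ 2 :=
          hlower.trans (pow_le_pow_left₀ (hs.eval_nonneg N a (by positivity)) hupper 2)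
      _ = s a ^ 2 * (4 * 2304 ^ k) := by
          rw [mul_pow, mul_pow, pow_right_comm]; norm_num; ring
  have hfour : (4 : ℝ) * 2304 ^ k ≤ 9216 ^ k := by
    rw [show (9216 : ℝ) = 4 * 2304 by norm_num, mul_pow]
    gcongr
    exact le_self_pow₀ (by norm_num) hk.ne'
  have hlt : (9216 : ℝ) ^ k < 2 ^ (16 * k) := by
    rw [pow_mul]
    exact pow_lt_pow_left₀ (by norm_num) (by norm_num) hk.ne'
  linarith

end FactorialWeight

section NormalizedInequality

open scoped Nat

variable {s : ℕ → ℝ} {l k : ℕ}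

lemma exists_rescaling_factorialWeight_le (h0 : 0 < s 0) (hl : 0 < s l) (hkl : k < l) :
    ∃ c > 0, ∃ a N, a ≤ k ∧ k < a + N ∧ a + N ≤ l ∧
      factorialWeight (fun m ↦ s m * c ^ m) (a + N) = factorialWeight (fun m ↦ s m * c ^ m) a ∧
      ∀ m ≤ l, factorialWeight (fun m ↦ s m * c ^ m) m ≤
        factorialWeight (fun m ↦ s m * c ^ m) a := by
  have hw0 : 0 < factorialWeight s 0 := by rw [factorialWeight]; positivity
  have hwl : 0 < factorialWeight s l := by rw [factorialWeight]; positivity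
  obtain ⟨c, hc, a, ha, b, hb, heq, hle⟩ :=
    exists_supporting_line (factorialWeight_nonneg s) k.zero_le hkl hw0 hwl
  rw [mem_Icc] at ha hb
  obtain ⟨N, rfl⟩ := Nat.exists_eq_add_of_le (ha.2.trans (Nat.le_of_succ_le hb.1))
  refine ⟨√c, sqrt_pos.2 hc, a, N, ha.2, hb.1, hb.2, ?_, fun m hm ↦ ?_⟩
  · simpa only [factorialWeight_mul_pow, sq_sqrt hc.le] using heq
  · simpa only [factorialWeight_mul_pow, sq_sqrt hc.le] using hle m (mem_Icc.2 ⟨m.zero_le, hm⟩)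

lemma sqrt_factorialWeight_mul_le (hs : ∀ m, 0 ≤ s m) (hk : 0 < k) (m : ℕ) {q : ℕ} (hkq : k ≤ q)
    {W : ℝ} (hW : 0 ≤ W) (hm : W * 3⁻¹ ^ q ≤ factorialWeight s m) :
    √W * 3⁻¹ ^ q ≤ s m * (√k)⁻¹ ^ m := by
  have := hs m
  have hw := factorialWeight_nonneg s m
  refine le_of_pow_le_pow_left₀ two_ne_zero (by positivity) ?_
  have hkm : (3⁻¹ : ℝ) ^ k ≤ m ! / k ^ m := by
    rw [inv_pow, inv_le_comm₀ (by positivity) (by positivity), inv_div]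
    exact pow_div_factorial_le_three_pow k m
  calc (√W * 3⁻¹ ^ q) ^ 2 = W * 3⁻¹ ^ q * 3⁻¹ ^ q := by rw [mul_pow, sq_sqrt hW]; ring
    _ ≤ W * 3⁻¹ ^ q * 3⁻¹ ^ k := by
        gcongr W * 3⁻¹ ^ q * ?_
        exact pow_le_pow_of_le_one (by norm_num) (by norm_num) hkq
    _ ≤ factorialWeight s m * (m ! / k ^ m) := by gcongr
    _ = (s m * (√k)⁻¹ ^ m) ^ 2 := by
        rw [mul_pow, pow_right_comm, inv_pow, sq_sqrt k.cast_nonneg,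
          ← factorialWeight_mul_factorial, inv_pow]
        ring

lemma HasJensenGrowth.sqrt_factorialWeight_mul_le_max (hs : HasJensenGrowth s l) (hk : 0 < k)
    {a N : ℕ} (hak : a ≤ k) (hkN : k < a + N) (hNl : a + N ≤ l) (hpos : 0 < s a)
    (heq : factorialWeight s (a + N) = factorialWeight s a)
    (hle : ∀ m ≤ l, factorialWeight s m ≤ factorialWeight s a) :
    √(factorialWeight s a) * (3⁻¹ ^ 3460) ^ k ≤
      max (s k * (√k)⁻¹ ^ k) (s (k + 1) * (√k)⁻¹ ^ (k + 1)) := by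
  have hwa : 0 < factorialWeight s a := by rw [factorialWeight]; positivity
  obtain ⟨m, hkm, hmB, hml, hm⟩ := hs.exists_factorialWeight_ge hk hak hkN hNl hpos heq hle
  obtain ⟨d, rfl⟩ := Nat.exists_eq_add_of_le (hak.trans hkm.le)
  have hleft := sqrt_factorialWeight_mul_le hs.nonneg hk a (q := 384 * k) (by lia)
    hwa.le (mul_le_of_le_one_right hwa.le (pow_le_one₀ (by norm_num) (by norm_num)))
  have hright := sqrt_factorialWeight_mul_le hs.nonneg hk (a + d) (by lia) hwa.le hm
  have hdescent := (hs.rescale (c := (√k)⁻¹) (by positivity)).mul_pow_le_max hak hkm hml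
    (by positivity) hleft hright
  refine le_trans ?_ hdescent
  rw [mul_assoc, show (9⁻¹ : ℝ) = 3⁻¹ ^ 2 by norm_num, ← pow_mul, ← pow_mul, ← pow_add]
  gcongr _ * ?_
  -- `3460 = 384 + 2 * 1538`: the loss in the weight, and two factors `3` per step of the descent.
  exact pow_le_pow_of_le_one (by norm_num) (by norm_num) (by lia)

lemma HasJensenGrowth.exists_rescaling (hs : HasJensenGrowth s l) (h0 : s 0 = 1) (hl : 0 < s l)
    (hk : 0 < k) (hkl : k < l) :
    ∃ c > 0, ∃ H ≥ 1, s l * c ^ l ≤ H * √l ^ l ∧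
      H * (3⁻¹ ^ 3460) ^ k ≤ max (s k * (c / √k) ^ k) (s (k + 1) * (c / √k) ^ (k + 1)) := by
  obtain ⟨c, hc, a, N, hak, hkN, hNl, heq, hle⟩ :=
    exists_rescaling_factorialWeight_le (h0 ▸ one_pos) hl hkl
  set u : ℕ → ℝ := fun m ↦ s m * c ^ m with hu
  have hcu : HasJensenGrowth u l := hs.rescale hc
  have hw : 1 ≤ factorialWeight u a := by
    simpa [factorialWeight, hu, h0] using hle 0 l.zero_le
  have hua : 0 < u a := by
    refine (hcu.nonneg a).lt_of_ne fun h ↦ ?_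
    norm_num [factorialWeight, ← h] at hw
  refine ⟨c, hc, √(factorialWeight u a), one_le_sqrt.2 hw, ?_, ?_⟩
  · have hwa := factorialWeight_nonneg u a
    refine le_of_pow_le_pow_left₀ two_ne_zero (by positivity) ?_
    calc u l ^ 2 = factorialWeight u l * l ! := (factorialWeight_mul_factorial u l).symm
      _ ≤ factorialWeight u a * l ^ l := by
          gcongr
          · exact hle l le_rfl
          · exact_mod_cast l.factorial_le_pow
      _ = (√(factorialWeight u a) * √l ^ l) ^ 2 := by
          rw [mul_pow, pow_right_comm, sq_sqrt hwa, sq_sqrt l.cast_nonneg]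
  · simpa only [hu, mul_assoc, ← mul_pow, ← div_eq_mul_inv] using
      hcu.sqrt_factorialWeight_mul_le_max hk hak hkN hNl hua heq hle

lemma rpow_inv_le_of_mul_pow_le {x z c H θ κ r : ℝ} {k p l : ℕ} (hx : 0 ≤ x) (hz : 0 ≤ z)
    (hc : 0 < c) (hκ : 0 < κ) (hr : 0 ≤ r) (hθ : 0 < θ) (hθ1 : θ ≤ 1) (hH : 1 ≤ H) (hkp : k ≤ p)
    (hp : p ≠ 0) (hpl : p ≤ l) (hupper : x * c ^ l ≤ H * r ^ l)
    (hlower : H * θ ^ k ≤ z * (c / κ) ^ p) :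
    x ^ (l⁻¹ : ℝ) ≤ θ⁻¹ * (r / κ) * z ^ (p⁻¹ : ℝ) := by
  set D : ℝ := z ^ (p⁻¹ : ℝ) * (c / κ) / θ with hD
  have hD0 : 0 ≤ D := by positivity
  have hHD : H ≤ D ^ p := by
    rw [hD, div_pow, mul_pow, rpow_inv_natCast_pow hz hp, le_div_iff₀ (by positivity)]
    refine le_trans ?_ hlower
    gcongr H * ?_
    exact pow_le_pow_of_le_one hθ.le hθ1 hkp
  have hD1 : 1 ≤ D := (one_le_pow_iff_of_nonneg hD0 hp).1 (hH.trans hHD)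
  have hl : 0 < l := by lia
  rw [rpow_inv_le_iff_of_pos hx (by positivity) (by positivity), rpow_natCast]
  have hcl : 0 < c ^ l := by positivity
  refine le_of_mul_le_mul_right ?_ hcl
  calc x * c ^ l ≤ H * r ^ l := hupper
    _ ≤ D ^ l * r ^ l := by
        gcongr
        exact hHD.trans (pow_le_pow_right₀ hD1 hpl)
    _ = (θ⁻¹ * (r / κ) * z ^ (p⁻¹ : ℝ)) ^ l * c ^ l := by
        rw [← mul_pow, ← mul_pow, hD]
        congr 1
        ring

lemma HasJensenGrowth.rpow_inv_le (hs : HasJensenGrowth s l) (h0 : s 0 = 1) (hk : 0 < k)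
    (hkl : k < l) :
    s l ^ (l⁻¹ : ℝ) ≤
      3 ^ 3460 * √(l / k) * max (s k ^ (k⁻¹ : ℝ)) (s (k + 1) ^ ((k + 1 : ℕ)⁻¹ : ℝ)) := by
  rcases (hs.nonneg l).eq_or_lt with hl | hl
  · have hl0 : (l⁻¹ : ℝ) ≠ 0 := inv_ne_zero (by exact_mod_cast (by lia : l ≠ 0))
    rw [← hl, zero_rpow hl0]
    exact mul_nonneg (by positivity) (le_max_of_le_left (rpow_nonneg (hs.nonneg k) _))
  obtain ⟨c, hc, H, hH, hupper, hlower⟩ := hs.exists_rescaling h0 hl hk hkl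
  have hroot {p : ℕ} (hkp : k ≤ p) (hpl : p ≤ l) (hp : H * (3⁻¹ ^ 3460) ^ k ≤ s p * (c / √k) ^ p) :
      s l ^ (l⁻¹ : ℝ) ≤ 3 ^ 3460 * √(l / k) * s p ^ (p⁻¹ : ℝ) := by
    have h := rpow_inv_le_of_mul_pow_le (hs.nonneg l) (hs.nonneg p) hc (by positivity)
      (sqrt_nonneg l) (by positivity) (pow_le_one₀ (by norm_num) (by norm_num)) hH hkp (by lia)
      hpl hupper hp
    rwa [← inv_pow, inv_inv, ← sqrt_div l.cast_nonneg] at h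
  rw [mul_max_of_nonneg _ _ (by positivity)]
  exact le_max_iff.2 ((le_max_iff.1 hlower).imp (hroot le_rfl hkl.le) (hroot k.le_succ hkl))

end NormalizedInequality

section ElementarySymmetric

open scoped Nat

lemma choose_mul_smean {n m : ℕ} (hm : m ≤ n) (y : Fin n → ℝ) :
    n.choose m * smean n m y = esymmS n m y :=
  mul_div_cancel₀ _ (by exact_mod_cast (Nat.choose_pos hm).ne')

lemma jensenPoly_smean (n : ℕ) (y : Fin n → ℝ) :
    jensenPoly (fun m ↦ smean n m y) n 0 = ∏ i, (1 + C (y i) * X) := by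
  rw [prod_one_add, sum_powerset, card_univ, Fintype.card_fin, jensenPoly]
  refine sum_congr rfl fun m hm ↦ ?_
  rw [zero_add, choose_mul_smean (mem_range_succ_iff.1 hm), esymmS, map_sum]
  refine sum_congr rfl fun A hA ↦ ?_
  rw [prod_mul_distrib, prod_const, (mem_powersetCard.1 hA).2, ← map_prod, C_mul_X_pow_eq_monomial]

lemma splits_jensenPoly_smean (n : ℕ) (y : Fin n → ℝ) :
    (jensenPoly (fun m ↦ smean n m y) n 0).Splits := by
  rw [jensenPoly_smean]
  exact .prod fun i _ ↦ .of_natDegree_le_one (by compute_degree)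

lemma div_pow_le_choose {n p : ℕ} (hp : p ≤ n) : (n / p : ℝ) ^ p ≤ n.choose p := by
  induction p generalizing n with
  | zero => simp
  | succ p ih =>
    obtain ⟨n, rfl⟩ := Nat.exists_eq_succ_of_ne_zero (Nat.ne_zero_of_lt hp)
    have hpn : p ≤ n := Nat.succ_le_succ_iff.1 hp
    have hratio : ((n + 1 : ℕ) / (p + 1 : ℕ) : ℝ) ^ p ≤ (n / p) ^ p := by
      rcases p.eq_zero_or_pos with rfl | hp0
      · simp
      gcongr ?_ ^ p
      rw [div_le_div_iff₀ (by positivity) (by positivity)]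
      have : (p : ℝ) ≤ n := by exact_mod_cast hpn
      push_cast
      linarith
    calc ((n + 1 : ℕ) / (p + 1 : ℕ) : ℝ) ^ (p + 1)
        ≤ n.choose p * ((n + 1 : ℕ) / (p + 1 : ℕ)) := by
          rw [pow_succ]
          gcongr
          exact hratio.trans (ih hpn)
      _ = (n + 1).choose (p + 1) := by
          rw [← mul_div_assoc, div_eq_iff (by positivity), mul_comm]
          exact_mod_cast Nat.add_one_mul_choose_eq n p

lemma choose_le_three_mul_div_pow (n l : ℕ) : (n.choose l : ℝ) ≤ (3 * n / l) ^ l := by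
  rcases l.eq_zero_or_pos with rfl | hl
  · simp
  calc (n.choose l : ℝ) ≤ n ^ l / l ! := Nat.choose_le_pow_div l n
    _ ≤ (3 * n / l) ^ l := by
      rw [div_pow, mul_pow, div_le_div_iff₀ (by positivity) (by positivity), mul_comm (3 ^ l),
        mul_assoc, mul_comm (3 ^ l)]
      gcongr
      exact pow_le_factorial_mul_three_pow l l

variable {n l p : ℕ}

lemma abs_esymmS_rpow_inv_le (hl : l ≠ 0) (hln : l ≤ n) (y : Fin n → ℝ) :
    |esymmS n l y| ^ (l⁻¹ : ℝ) ≤ 3 * n / l * |smean n l y| ^ (l⁻¹ : ℝ) := by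
  rw [← choose_mul_smean hln, abs_mul, Nat.abs_cast, mul_rpow (by positivity) (by positivity)]
  gcongr
  rw [rpow_inv_le_iff_of_pos (by positivity) (by positivity) (by positivity), rpow_natCast]
  exact choose_le_three_mul_div_pow n l

lemma abs_smean_rpow_inv_le (hp : p ≠ 0) (hpn : p ≤ n) (y : Fin n → ℝ) :
    |smean n p y| ^ (p⁻¹ : ℝ) ≤ p / n * |esymmS n p y| ^ (p⁻¹ : ℝ) := by
  have hn : 0 < n := by lia
  rw [rpow_inv_le_iff_of_pos (by positivity) (by positivity) (by positivity), rpow_natCast, mul_pow,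
    rpow_inv_natCast_pow (abs_nonneg _) hp, ← choose_mul_smean hpn, abs_mul, Nat.abs_cast,
    ← mul_assoc]
  refine le_mul_of_one_le_left (abs_nonneg _) ?_
  calc (1 : ℝ) = (p / n) ^ p * (n / p) ^ p := by
        rw [← mul_pow, div_mul_div_cancel₀ (by positivity), div_self (by positivity), one_pow]
    _ ≤ (p / n) ^ p * n.choose p := by
        gcongr
        exact div_pow_le_choose hpn

theorem abs_smean_rpow_inv_le_max {k : ℕ} (hk : 0 < k) (hkl : k < l) (hln : l ≤ n)
    (y : Fin n → ℝ) :
    |smean n l y| ^ (l⁻¹ : ℝ) ≤ 3 ^ 3460 * √(l / k) *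
      max (|smean n k y| ^ (k⁻¹ : ℝ)) (|smean n (k + 1) y| ^ ((k + 1 : ℕ)⁻¹ : ℝ)) := by
  have hgrowth := (hasJensenGrowth_abs (splits_jensenPoly_smean n y)).mono hln
  exact hgrowth.rpow_inv_le (by simp [smean, esymmS]) hk hkl

lemma max_abs_smean_rpow_inv_le {k : ℕ} (hk : 0 < k) (hkn : k < n) (y : Fin n → ℝ) :
    max (|smean n k y| ^ (k⁻¹ : ℝ)) (|smean n (k + 1) y| ^ ((k + 1 : ℕ)⁻¹ : ℝ)) ≤
      2 * k / n *
        max (|esymmS n k y| ^ (k⁻¹ : ℝ)) (|esymmS n (k + 1) y| ^ ((k + 1 : ℕ)⁻¹ : ℝ)) := by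
  rw [mul_max_of_nonneg _ _ (by positivity)]
  refine max_le_max ((abs_smean_rpow_inv_le (by lia) hkn.le y).trans ?_)
    ((abs_smean_rpow_inv_le (by lia) hkn y).trans ?_)
  all_goals
    gcongr
    exact_mod_cast (by lia : _ ≤ 2 * k)

lemma div_mul_sqrt_div (a b : ℝ) : a / b * √(b / a) = √(a / b) := by
  rw [← inv_div b a, sqrt_inv, inv_mul_eq_div, sqrt_div_self]

end ElementarySymmetric

theorem maclaurin_type_inequality_unnormalized :
    ∃ C : ℝ, 0 < C ∧ ∀ (n : ℕ), 1 ≤ n → ∀ (y : Fin n → ℝ) (k ℓ : ℕ),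
      1 ≤ k → k < ℓ → ℓ ≤ n →
      |esymmS n ℓ y| ^ ((1 : ℝ) / ℓ) ≤
        C * ((k : ℝ) / ℓ) ^ ((1 : ℝ) / 2) *
          max (|esymmS n k y| ^ ((1 : ℝ) / k)) (|esymmS n (k + 1) y| ^ ((1 : ℝ) / (k + 1))) := by
  refine ⟨6 * 3 ^ 3460, by positivity, fun n _ y k l hk hkl hln ↦ ?_⟩
  rw [← sqrt_eq_rpow]
  simp only [one_div, ← Nat.cast_add_one]
  set M := max (|esymmS n k y| ^ (k⁻¹ : ℝ)) (|esymmS n (k + 1) y| ^ ((k + 1 : ℕ)⁻¹ : ℝ))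
  calc |esymmS n l y| ^ (l⁻¹ : ℝ)
      ≤ 3 * n / l * |smean n l y| ^ (l⁻¹ : ℝ) := abs_esymmS_rpow_inv_le (by lia) hln y
    _ ≤ 3 * n / l * (3 ^ 3460 * √(l / k) * (2 * k / n * M)) := by
        gcongr
        refine (abs_smean_rpow_inv_le_max hk hkl hln y).trans ?_
        gcongr
        exact max_abs_smean_rpow_inv_le hk (hkl.trans_le hln) y
    _ = 6 * 3 ^ 3460 * (k / l * √(l / k)) * M := by
        have : n ≠ 0 := by lia
        field_simp
        ring
    _ = 6 * 3 ^ 3460 * √(k / l) * M := by rw [div_mul_sqrt_div]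
end

section
/- There exists an absolute constant C > 0 such that the following holds: for every n ≥ 1, all real numbers y_1, …, y_n, every integer 1 ≤ k < n, and every real θ > 0, if |S_k(y)|^2 ≤ θ^k / k! and |S_{k+1}(y)|^2 ≤ θ^(k+1) / (k+1)!, then |S_ℓ(y)|^2 ≤ (C·θ)^ℓ / ℓ! for all integers k ≤ ℓ ≤ n. -/
open Finset Real

/-!
After rescaling `y`, the hypotheses imply that `b m = |s_m| / √m!`, with `s_m` the elementary
symmetric means, is at most `1` at `m = k` and `m = k + 1`, and it suffices to show that
`b l ≤ exp (40 * l)` for `l ≥ k`.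

Differentiation and reversal preserve real-rootedness, so all Jensen polynomials
`∑ m, binom(N, m) s_{p + m} X ^ m` inherit it from `∏ i, (1 + y i * X)`. At `I * R` such a
polynomial is large compared with its constant term: by AM-GM for the squared roots, its modulus
there is at least `|s_p| * (1 + g) ^ (N / 2)`, where `g = (|s_{p + N}| * R ^ N / |s_p|) ^ (2 / N)`.

If the claim fails at `l`, let `p` be the last index before `k` at which `b` is at least
`exp (40 * threshold k p)`, and choose `N` and `τ` with `b (p + m) ≤ b p * τ ^ m` for all later
`m`, with equality at `m = N`. As `threshold` bends down towards `k`, the terms up to `k + 1` are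
much smaller than `b p * τ ^ m`. For a suitable `R` the triangle inequality then bounds the Jensen
polynomial at `I * R` by less than the lower bound above.
-/

namespace LeeInequality

lemma one_add_mul_rpow_le {g x : ℝ} (hg : 0 < g) (hx : 0 ≤ x) :
    (1 + g) * (x / g) ^ (g / (1 + g)) ≤ 1 + x := by
  have amgm := geom_mean_le_arith_mean2_weighted (w₁ := 1 / (1 + g)) (w₂ := g / (1 + g))
    (p₁ := 1) (p₂ := x / g) (by positivity) (by positivity) (by positivity) (by positivity)
    (by field_simp)
  rw [one_rpow, one_mul] at amgm
  calc (1 + g) * (x / g) ^ (g / (1 + g))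
      ≤ (1 + g) * (1 / (1 + g) * 1 + g / (1 + g) * (x / g)) := by gcongr
    _ = 1 + x := by field_simp

lemma one_add_pow_card_le_prod {m : Multiset ℝ} (hm : ∀ x ∈ m, 0 ≤ x) {g : ℝ} (hg : 0 < g)
    (h : g ^ m.card ≤ m.prod) : (1 + g) ^ m.card ≤ (m.map (1 + ·)).prod := by
  have hratio : 1 ≤ (m.map (· / g)).prod := by
    rw [Multiset.prod_map_div, Multiset.map_id', Multiset.map_const', Multiset.prod_replicate]
    exact (one_le_div (by positivity)).2 h
  calc (1 + g) ^ m.card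
      ≤ (1 + g) ^ m.card * (m.map (· / g)).prod ^ (g / (1 + g)) :=
        le_mul_of_one_le_right (by positivity) (one_le_rpow hratio (by positivity))
    _ = (m.map fun x => (1 + g) * (x / g) ^ (g / (1 + g))).prod := by
        rw [Multiset.prod_map_mul, Multiset.map_const', Multiset.prod_replicate,
          multiset_prod_map_rpow m _ fun x hx => div_nonneg (hm x hx) hg.le]
    _ ≤ (m.map (1 + ·)).prod :=
        Multiset.prod_map_le_prod_map₀ _ _
          (fun x hx => by have := hm x hx; positivity) fun x hx => one_add_mul_rpow_le hg (hm x hx)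

section RealRooted

open Polynomial

variable {f : ℝ[X]}

lemma splits_derivative (hf : f.Splits) : (derivative f).Splits := by
  rw [splits_iff_card_roots] at hf ⊢
  obtain hdeg | hdeg := Nat.eq_zero_or_pos f.natDegree
  · simp [derivative_of_natDegree_zero hdeg]
  · have := card_roots_le_derivative f
    have := card_roots' (derivative f)
    have := natDegree_derivative_le f
    omega

lemma splits_reverse (hf : f.Splits) : f.reverse.Splits := by
  obtain ⟨roots, hroots⟩ := splits_iff_exists_multiset.1 hf
  rw [hroots, reverse_mul_of_domain, reverse_C]
  refine (Splits.C _).mul ?_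
  clear hroots
  induction roots using Multiset.induction_on with
  | empty => simp [reverse, reflect_one]
  | cons r roots ih =>
    rw [Multiset.map_cons, Multiset.prod_cons, reverse_mul_of_domain]
    refine (Splits.of_natDegree_le_one ((reverse_natDegree_le _).trans ?_)).mul ih
    exact (natDegree_X_sub_C r).le

lemma splits_reflect (hf : f.Splits) {N : ℕ} (hN : f.natDegree ≤ N) : (reflect N f).Splits := by
  have hreflect : reflect N f = f.reverse * X ^ (N - f.natDegree) := by
    have h := reflect_mul f 1 le_rfl (natDegree_one.trans_le (Nat.zero_le (N - f.natDegree)))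
    rwa [mul_one, Nat.add_sub_cancel' hN, reflect_one] at h
  exact hreflect ▸ (splits_reverse hf).mul (Splits.X_pow _)

lemma splits_of_splits_C_mul {a : ℝ} (ha : a ≠ 0) (h : (C a * f).Splits) : f.Splits := by
  simpa [← mul_assoc, ← C_mul, ha] using h.C_mul a⁻¹

/-- The Jensen polynomial `∑ m ≤ N, binom(N, m) s_{p + m} X ^ m` of degree `N` and shift `p` of
the sequence `s`. -/
noncomputable def jensenPoly (s : ℕ → ℝ) (p N : ℕ) : ℝ[X] :=
  ∑ m ∈ range (N + 1), C (N.choose m * s (p + m)) * X ^ m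

variable {s : ℕ → ℝ} {p N : ℕ}

lemma coeff_jensenPoly (s : ℕ → ℝ) (p N m : ℕ) :
    (jensenPoly s p N).coeff m = N.choose m * s (p + m) := by
  simp only [jensenPoly, finsetSum_coeff, coeff_C_mul, coeff_X_pow, mul_ite, mul_one, mul_zero,
    sum_ite_eq, mem_range, ite_eq_left_iff]
  intro hm
  simp [Nat.choose_eq_zero_of_lt (show N < m by omega)]

lemma natDegree_jensenPoly_le (s : ℕ → ℝ) (p N : ℕ) : (jensenPoly s p N).natDegree ≤ N := by
  rw [natDegree_le_iff_coeff_eq_zero]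
  intro m hm
  simp [coeff_jensenPoly, Nat.choose_eq_zero_of_lt hm]

lemma natDegree_jensenPoly (h : s (p + N) ≠ 0) : (jensenPoly s p N).natDegree = N :=
  (natDegree_jensenPoly_le s p N).antisymm <|
    le_natDegree_of_ne_zero (by simpa [coeff_jensenPoly] using h)

lemma derivative_jensenPoly (s : ℕ → ℝ) (p N : ℕ) :
    derivative (jensenPoly s p (N + 1)) = C ((N + 1 : ℕ) : ℝ) * jensenPoly s (p + 1) N := by
  ext m
  have h : ((N + 1 : ℕ) : ℝ) * N.choose m = (N + 1).choose (m + 1) * (m + 1) := by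
    exact_mod_cast Nat.add_one_mul_choose_eq N m
  rw [coeff_derivative, coeff_C_mul, coeff_jensenPoly, coeff_jensenPoly, ← mul_assoc, h,
    add_right_comm p, add_assoc]
  ring

lemma reflect_derivative_reflect_jensenPoly (s : ℕ → ℝ) (p N : ℕ) :
    reflect N (derivative (reflect (N + 1) (jensenPoly s p (N + 1)))) =
      C ((N + 1 : ℕ) : ℝ) * jensenPoly s p N := by
  ext m
  rw [coeff_reflect, coeff_derivative, coeff_reflect, coeff_C_mul, coeff_jensenPoly,
    coeff_jensenPoly]
  obtain hm | hm := le_or_gt m N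
  · rw [revAt_le hm, revAt_le (by omega), show N + 1 - (N - m + 1) = m by omega]
    have h : (N.choose m : ℝ) * ((N + 1 : ℕ) : ℝ) = (N + 1).choose m * ((N - m : ℕ) + 1) := by
      exact_mod_cast Nat.sub_add_comm hm ▸ Nat.choose_mul_succ_eq N m
    linear_combination -s (p + m) * h
  · simp [revAt_eq_self_of_lt hm, revAt_eq_self_of_lt (Nat.succ_lt_succ hm),
      Nat.choose_eq_zero_of_lt hm, Nat.choose_eq_zero_of_lt (Nat.succ_lt_succ hm)]

lemma splits_jensenPoly_shift (h : (jensenPoly s p (N + 1)).Splits) :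
    (jensenPoly s (p + 1) N).Splits :=
  splits_of_splits_C_mul (Nat.cast_ne_zero.2 N.succ_ne_zero)
    (derivative_jensenPoly s p N ▸ splits_derivative h)

lemma splits_jensenPoly_truncate (h : (jensenPoly s p (N + 1)).Splits) :
    (jensenPoly s p N).Splits := by
  have hdeg := natDegree_jensenPoly_le s p (N + 1)
  refine splits_of_splits_C_mul (Nat.cast_ne_zero.2 N.succ_ne_zero)
    (reflect_derivative_reflect_jensenPoly s p N ▸
      splits_reflect (splits_derivative (splits_reflect h hdeg)) ?_)
  have := natDegree_derivative_le (reflect (N + 1) (jensenPoly s p (N + 1)))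
  have := (natDegree_reflect_le (p := jensenPoly s p (N + 1))).trans_eq (max_eq_left hdeg)
  omega

lemma splits_jensenPoly_of_le {n : ℕ} (h : (jensenPoly s 0 n).Splits) (hpN : p + N ≤ n) :
    (jensenPoly s p N).Splits := by
  have hprefix : (jensenPoly s 0 (p + N)).Splits :=
    Nat.decreasingInduction (fun _ _ => splits_jensenPoly_truncate) h hpN
  clear hpN h
  induction p generalizing N with
  | zero => simpa using hprefix
  | succ p ih => exact splits_jensenPoly_shift (ih (by rwa [show p + (N + 1) = p + 1 + N by ring]))

lemma jensenPoly_smean (n : ℕ) (y : Fin n → ℝ) :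
    jensenPoly (fun m => smean n m y) 0 n = ∏ i, (1 + C (y i) * X) := by
  rw [prod_one_add, jensenPoly, sum_powerset, card_fin]
  refine sum_congr rfl fun m hm => ?_
  have hchoose : (n.choose m : ℝ) ≠ 0 :=
    Nat.cast_ne_zero.2 (Nat.choose_pos (mem_range_succ_iff.1 hm)).ne'
  rw [smean, zero_add, mul_div_cancel₀ _ hchoose, esymmS, map_sum, sum_mul]
  refine sum_congr rfl fun A hA => ?_
  rw [prod_mul_distrib, map_prod, prod_const, (mem_powersetCard.1 hA).2]

lemma splits_jensenPoly_smean (n : ℕ) (y : Fin n → ℝ) :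
    (jensenPoly (fun m => smean n m y) 0 n).Splits := by
  rw [jensenPoly_smean]
  refine Splits.prod fun i _ => Splits.of_natDegree_le_one ?_
  compute_degree

lemma norm_sq_aeval_I_mul (hf : f.Splits) (R : ℝ) :
    ‖aeval (Complex.I * R) f‖ ^ 2 =
      f.leadingCoeff ^ 2 * (f.roots.map fun r => R ^ 2 + r ^ 2).prod := by
  have hfactor (r : ℝ) : Complex.normSq (Complex.I * R - r) = R ^ 2 + r ^ 2 := by
    simp [Complex.normSq_apply]
    ring
  conv_lhs => rw [← Complex.normSq_eq_norm_sq, hf.eq_prod_roots]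
  simp only [map_mul, map_multiset_prod, Multiset.map_map, Function.comp_def, map_sub, aeval_X,
    aeval_C, Complex.coe_algebraMap, Complex.normSq_ofReal, hfactor, ← sq]

lemma coeff_zero_sq (hf : f.Splits) :
    f.coeff 0 ^ 2 = f.leadingCoeff ^ 2 * (f.roots.map fun r => r ^ 2).prod := by
  simpa [← coeff_zero_eq_aeval_zero'] using norm_sq_aeval_I_mul hf 0

lemma norm_aeval_jensenPoly_le (s : ℕ → ℝ) (p N : ℕ) (z : ℂ) :
    ‖aeval z (jensenPoly s p N)‖ ≤
      ∑ m ∈ range (N + 1), N.choose m * |s (p + m)| * ‖z‖ ^ m := by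
  rw [jensenPoly, map_sum]
  refine (norm_sum_le _ _).trans_eq (sum_congr rfl fun m _ => ?_)
  simp

lemma coeff_zero_sq_mul_one_add_pow_le (hf : f.Splits) (h0 : f.coeff 0 ≠ 0) {R g : ℝ}
    (hg : 0 < g)
    (h : g ^ f.natDegree * f.coeff 0 ^ 2 ≤ (f.leadingCoeff * R ^ f.natDegree) ^ 2) :
    f.coeff 0 ^ 2 * (1 + g) ^ f.natDegree ≤ ‖aeval (Complex.I * R) f‖ ^ 2 := by
  have hroot : ∀ r ∈ f.roots, r ≠ 0 := by
    rintro r hr rfl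
    exact h0 ((coeff_zero_eq_eval_zero f).trans (isRoot_of_mem_roots hr))
  set ratio : Multiset ℝ := f.roots.map fun r => R ^ 2 / r ^ 2 with hratio
  have hcard : ratio.card = f.natDegree := by
    rw [hratio, Multiset.card_map, hf.natDegree_eq_card_roots]
  have hprod : f.coeff 0 ^ 2 * ratio.prod = (f.leadingCoeff * R ^ f.natDegree) ^ 2 := by
    rw [coeff_zero_sq hf, mul_assoc, ← Multiset.prod_map_mul,
      Multiset.map_congr rfl fun r hr => mul_div_cancel₀ (R ^ 2) (pow_ne_zero 2 (hroot r hr)),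
      Multiset.map_const', Multiset.prod_replicate, ← hf.natDegree_eq_card_roots]
    ring
  have hgeom : g ^ ratio.card ≤ ratio.prod := by
    rw [hcard]
    refine le_of_mul_le_mul_left ?_ (by positivity : 0 < f.coeff 0 ^ 2)
    rwa [hprod, mul_comm]
  have hnonneg : ∀ x ∈ ratio, 0 ≤ x := by
    simp only [hratio, Multiset.mem_map]
    rintro _ ⟨r, -, rfl⟩
    positivity
  calc f.coeff 0 ^ 2 * (1 + g) ^ f.natDegree
      ≤ f.coeff 0 ^ 2 * (ratio.map (1 + ·)).prod := by
        rw [← hcard]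
        gcongr
        exact one_add_pow_card_le_prod hnonneg hg hgeom
    _ = ‖aeval (Complex.I * R) f‖ ^ 2 := by
        rw [coeff_zero_sq hf, norm_sq_aeval_I_mul hf, mul_assoc, hratio, Multiset.map_map,
          ← Multiset.prod_map_mul]
        congr 2
        refine Multiset.map_congr rfl fun r hr => ?_
        have := hroot r hr
        simp only [Function.comp_apply]
        field_simp
        ring

theorem abs_mul_exp_le_sum (hs : (jensenPoly s p N).Splits) (hp : s p ≠ 0) (hN : s (p + N) ≠ 0)
    {R g : ℝ} (hR : 0 ≤ R) (hg : 0 < g) (hg1 : g ≤ 1)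
    (h : g ^ N * s p ^ 2 ≤ (s (p + N) * R ^ N) ^ 2) :
    |s p| * exp (N * g / 4) ≤ ∑ m ∈ range (N + 1), N.choose m * |s (p + m)| * R ^ m := by
  have hdeg := natDegree_jensenPoly hN
  have hlead : (jensenPoly s p N).leadingCoeff = s (p + N) := by
    simp [leadingCoeff, hdeg, coeff_jensenPoly]
  have hzero : (jensenPoly s p N).coeff 0 = s p := by simp [coeff_jensenPoly]
  have hnorm := coeff_zero_sq_mul_one_add_pow_le hs (hzero ▸ hp) hg (by rwa [hdeg, hlead, hzero])
  rw [hdeg, hzero] at hnorm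
  have hexp : exp (g / 2) ≤ 1 + g := by
    rw [← le_log_iff_exp_le (by linarith)]
    refine le_trans ?_ (le_log_one_add_of_nonneg hg.le)
    rw [div_le_div_iff₀ (by norm_num) (by linarith)]
    nlinarith
  have hsum := norm_aeval_jensenPoly_le s p N (Complex.I * R)
  rw [norm_mul, Complex.norm_I, one_mul, Complex.norm_real, norm_of_nonneg hR] at hsum
  refine le_trans (le_of_sq_le_sq ?_ (norm_nonneg _)) hsum
  calc (|s p| * exp (N * g / 4)) ^ 2 = s p ^ 2 * exp (g / 2) ^ N := by
        rw [mul_pow, sq_abs, ← exp_nat_mul, ← exp_nat_mul]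
        ring_nf
    _ ≤ s p ^ 2 * (1 + g) ^ N := by gcongr
    _ ≤ _ := hnorm

end RealRooted

section CriticalWindow

/-- The damping factor `ε` imposed per step on the first part of a critical window that starts at
distance `i` below `k`. -/
noncomputable def decay (k i : ℝ) : ℝ := exp (-20 * √(k / i))

/-- The growth exponent below `k`: a window may start at an index `x < k` only if the sequence is
at least `exp (40 * threshold k x)` there. It vanishes at `0` and at `k`, and its slope after
`x = k - i` beats the logarithm of `decay k i`. -/
noncomputable def threshold (k x : ℝ) : ℝ := √(k * (k - x)) - (k - x)

lemma threshold_zero {k : ℝ} (hk : 0 ≤ k) : threshold k 0 = 0 := by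
  simp [threshold, hk]

lemma threshold_nonneg {k x : ℝ} (hx : 0 ≤ x) : 0 ≤ threshold k x := by
  rw [threshold, sub_nonneg]
  obtain hxk | hkx := le_total x k
  · exact le_sqrt_of_sq_le (by nlinarith)
  · linarith [sqrt_nonneg (k * (k - x))]

lemma threshold_le {k x : ℝ} (hk : 0 ≤ k) (hx : 0 ≤ x) : threshold k x ≤ x := by
  have : √(k * (k - x)) ≤ k := sqrt_le_iff.2 ⟨hk, by nlinarith⟩
  rw [threshold]
  linarith

lemma threshold_add_le {p i m : ℝ} (hp : 0 ≤ p) (hi : 1 ≤ i) (hm : m ≤ i + 1) :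
    threshold (p + i) (p + m) ≤ threshold (p + i) p + m - √((p + i) / i) / 2 * m := by
  set z := √((p + i) / i)
  have hk : p + i = z ^ 2 * i := by
    rw [sq_sqrt (by positivity), div_mul_cancel₀ _ (by positivity)]
  have hstart : √((p + i) * (p + i - p)) = z * i := by
    rw [add_sub_cancel_left, hk, mul_assoc, ← sq, ← mul_pow, sqrt_sq (by positivity)]
  have hend : √((p + i) * (p + i - (p + m))) = z * √(i * (i - m)) := by
    rw [add_sub_add_left_eq_sub, hk, mul_assoc, sqrt_mul (by positivity), sqrt_sq (sqrt_nonneg _)]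
  -- AM-GM; when `m > i` the square root is `0` and only `i + (i - m) ≥ 0` matters.
  have amgm : √(i * (i - m)) ≤ i - m / 2 :=
    sqrt_le_iff.2 ⟨by linarith, by nlinarith [sq_nonneg m]⟩
  rw [threshold, threshold, hstart, hend]
  nlinarith [mul_le_mul_of_nonneg_left amgm (sqrt_nonneg ((p + i) / i))]

lemma exp_threshold_add_le {p i m : ℕ} (hi : 1 ≤ i) (hm : m ≤ i + 1) :
    exp (40 * threshold (p + i) (p + m)) ≤
      exp (40 * threshold (p + i) p) * exp 40 ^ m * decay (p + i) i ^ m := by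
  have := threshold_add_le (p := p) (i := i) (m := m) p.cast_nonneg
    (by exact_mod_cast hi) (by exact_mod_cast hm)
  rw [decay, ← exp_nat_mul, ← exp_nat_mul, ← exp_add, ← exp_add, exp_le_exp]
  linarith

/-- A window of indices from `p` to `p + N`, passing `p + i` and `p + i + 1`, on which `b` is
dominated by the geometric progression `b p * τ ^ m` that joins its two end values, with an extra
damping up to the index `p + i + 1`. -/
structure CriticalWindow (b : ℕ → ℝ) (p i N : ℕ) (τ : ℝ) : Prop where
  one_le_gap : 1 ≤ i
  gap_add_two_le : i + 2 ≤ N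
  ratio_pos : 0 < τ
  start_pos : 0 < b p
  head_le : ∀ m ≤ i + 1, b (p + m) ≤ b p * (decay (p + i) i * τ) ^ m
  tail_le : ∀ m, i + 2 ≤ m → m ≤ N → b (p + m) ≤ b p * τ ^ m
  last_eq : b (p + N) = b p * τ ^ N

lemma exists_last_of_lt {P : ℕ → Prop} (h0 : P 0) {k : ℕ} (hk : 1 ≤ k) :
    ∃ p < k, P p ∧ ∀ m, p < m → m < k → ¬ P m := by
  classical
  refine ⟨Nat.findGreatest P (k - 1), ?_, Nat.findGreatest_spec (Nat.zero_le _) h0,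
    fun m hpm hmk => Nat.findGreatest_is_greatest hpm (by omega)⟩
  have := Nat.findGreatest_le (P := P) (k - 1)
  omega

lemma exists_pow_majorant {s : Finset ℕ} (hs : s.Nonempty) (hs0 : 0 ∉ s) {c : ℕ → ℝ}
    (hc : ∀ m, 0 ≤ c m) : ∃ τ, 0 ≤ τ ∧ (∃ N ∈ s, c N = τ ^ N) ∧ ∀ m ∈ s, c m ≤ τ ^ m := by
  have hroot : ∀ m ∈ s, (c m ^ (m : ℝ)⁻¹) ^ m = c m := fun m hm =>
    rpow_inv_natCast_pow (hc m) (ne_of_mem_of_not_mem hm hs0)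
  obtain ⟨N, hN, hmax⟩ := s.exists_max_image (fun m => c m ^ (m : ℝ)⁻¹) hs
  refine ⟨c N ^ (N : ℝ)⁻¹, rpow_nonneg (hc N) _, ⟨N, hN, (hroot N hN).symm⟩, fun m hm => ?_⟩
  rw [← hroot m hm]
  exact pow_le_pow_left₀ (rpow_nonneg (hc m) _) (hmax m hm) m

lemma le_mul_pow_of_le_of_le {x u v : ℝ} (hu : 0 ≤ u) (hv : 0 ≤ v) {m L : ℕ} (hmL : m ≤ L)
    (h0 : x ≤ u) (hL : x ≤ u * v ^ L) : x ≤ u * v ^ m := by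
  obtain hv1 | hv1 := le_total 1 v
  · exact h0.trans (le_mul_of_one_le_right hu (one_le_pow₀ hv1))
  · exact hL.trans (mul_le_mul_of_nonneg_left (pow_le_pow_of_le_one hv hv1 hmL) hu)

lemma exp_threshold_mul_pow_le {k u τ : ℝ} {p l m : ℕ} (hk : 0 ≤ k)
    (hu : exp (40 * threshold k p) ≤ u) (hτ : 0 ≤ τ) (hpl : p ≤ l)
    (hl : exp 40 ^ l ≤ u * τ ^ (l - p)) (hm : m ≤ l - p) :
    exp (40 * threshold k p) * exp 40 ^ m ≤ u * τ ^ m := by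
  have hstart : exp (40 * threshold k p) ≤ exp 40 ^ p := by
    rw [← exp_nat_mul, exp_le_exp]
    linarith [threshold_le hk p.cast_nonneg]
  have hend : exp (40 * threshold k p) ≤ u * (τ / exp 40) ^ (l - p) := by
    rw [div_pow, mul_div_assoc', le_div_iff₀ (by positivity)]
    calc exp (40 * threshold k p) * exp 40 ^ (l - p) ≤ exp 40 ^ p * exp 40 ^ (l - p) := by gcongr
      _ = exp 40 ^ l := pow_mul_pow_sub _ hpl
      _ ≤ u * τ ^ (l - p) := hl
  have := le_mul_pow_of_le_of_le ((exp_pos _).le.trans hu) (by positivity) hm hu hend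
  rwa [div_pow, mul_div_assoc', le_div_iff₀ (by positivity)] at this

variable {b : ℕ → ℝ} {k : ℕ}

lemma exists_last_threshold_le (hb0 : 1 ≤ b 0) (hk : 1 ≤ k) (hbk : b k ≤ 1)
    (hbk1 : b (k + 1) ≤ 1) :
    ∃ p < k, exp (40 * threshold k p) ≤ b p ∧
      ∀ m, p < m → m ≤ k + 1 → b m ≤ exp (40 * threshold k m) := by
  obtain ⟨p, hpk, hp, hlast⟩ := exists_last_of_lt
    (P := fun p => exp (40 * threshold k p) ≤ b p) (by simpa [threshold_zero] using hb0) hk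
  refine ⟨p, hpk, hp, fun m hpm hmk => ?_⟩
  obtain hlt | hge := lt_or_ge m k
  · exact (not_le.1 (hlast m hpm hlt)).le
  · have : 0 ≤ threshold k m := threshold_nonneg m.cast_nonneg
    have hexp : 1 ≤ exp (40 * threshold k m) := one_le_exp (by positivity)
    obtain rfl | rfl : m = k ∨ m = k + 1 := by omega
    exacts [hbk.trans hexp, hbk1.trans hexp]

theorem exists_criticalWindow {n l : ℕ} (hb : ∀ m, 0 ≤ b m) (hb0 : 1 ≤ b 0) (hk : 1 ≤ k)
    (hbk : b k ≤ 1) (hbk1 : b (k + 1) ≤ 1) (hkl : k + 2 ≤ l) (hln : l ≤ n)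
    (hl : exp 40 ^ l < b l) : ∃ p i N τ, p + N ≤ n ∧ CriticalWindow b p i N τ := by
  obtain ⟨p, hpk, hp, hhead⟩ := exists_last_threshold_le hb0 hk hbk hbk1
  obtain ⟨i, rfl⟩ := Nat.exists_eq_add_of_le hpk.le
  push_cast at hp hhead
  have hi : 1 ≤ i := by omega
  have hbp : 0 < b p := (exp_pos _).trans_le hp
  obtain ⟨τ, hτ, ⟨N, hN, hlast⟩, htail⟩ := exists_pow_majorant
    (s := Icc (i + 2) (n - p)) (c := fun m => b (p + m) / b p)
    ⟨l - p, mem_Icc.2 (by omega)⟩ (by simp) fun m => div_nonneg (hb _) hbp.le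
  simp only [div_le_iff₀' hbp, div_eq_iff hbp.ne', mul_comm _ (b p)] at hlast htail
  have hlτ : exp 40 ^ l < b p * τ ^ (l - p) := by
    have := htail (l - p) (mem_Icc.2 (by omega))
    rw [Nat.add_sub_cancel' (by omega)] at this
    exact hl.trans_le this
  have hτpos : 0 < τ := by
    refine hτ.lt_of_ne' fun h0 => ?_
    rw [h0, zero_pow (by omega), mul_zero] at hlτ
    exact hlτ.not_ge (by positivity)
  have hgrowth : ∀ m ≤ i + 1, exp (40 * threshold (p + i) p) * exp 40 ^ m ≤ b p * τ ^ m :=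
    fun m hm => exp_threshold_mul_pow_le (by positivity) hp hτ (by omega) hlτ.le (by omega)
  rw [mem_Icc] at hN
  refine ⟨p, i, N, τ, by omega, hi, hN.1, hτpos, hbp, fun m hm => ?_,
    fun m hm hmN => htail m (mem_Icc.2 ⟨hm, by omega⟩), hlast⟩
  obtain rfl | hm0 := m.eq_zero_or_pos
  · simp
  calc b (p + m) ≤ exp (40 * threshold (p + i) (p + m)) := by
        exact_mod_cast hhead (p + m) (by omega) (by omega)
    _ ≤ exp (40 * threshold (p + i) p) * exp 40 ^ m * decay (p + i) i ^ m :=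
        exp_threshold_add_le hi hm
    _ ≤ b p * τ ^ m * decay (p + i) i ^ m :=
        mul_le_mul_of_nonneg_right (hgrowth m hm) (pow_nonneg (exp_pos _).le m)
    _ = b p * (decay (p + i) i * τ) ^ m := by rw [mul_pow]; ring

end CriticalWindow

section FactorialBounds

lemma pow_self_le_exp_one_pow_mul_factorial (m : ℕ) : (m : ℝ) ^ m ≤ exp 1 ^ m * m.factorial := by
  have := pow_div_factorial_le_exp (m : ℝ) m.cast_nonneg m
  rwa [div_le_iff₀ (by positivity), ← mul_one (m : ℝ), exp_nat_mul, mul_one] at this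

lemma sqrt_factorial_add_le (p m : ℕ) :
    √((p + m).factorial : ℝ) ≤ √(p.factorial : ℝ) * √((p + m : ℕ) : ℝ) ^ m := by
  have h : (p + m).factorial ≤ p.factorial * (p + m) ^ m :=
    (Nat.factorial_mul_ascFactorial p m).symm.trans_le
      (Nat.mul_le_mul_left _ (Nat.ascFactorial_le_pow_add p m))
  refine sqrt_le_iff.2 ⟨by positivity, ?_⟩
  rw [mul_pow, pow_right_comm, sq_sqrt (Nat.cast_nonneg _), sq_sqrt (Nat.cast_nonneg _)]
  exact_mod_cast h

lemma choose_mul_pow_le {x : ℝ} (hx : 0 ≤ x) (N m : ℕ) :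
    N.choose m * x ^ m ≤ (N * x) ^ m / m.factorial := by
  rw [mul_pow, mul_div_right_comm]
  gcongr
  exact Nat.choose_le_pow_div m N

lemma pow_le_pow_self_mul_choose {m n : ℕ} (hmn : m ≤ n) : n ^ m ≤ m ^ m * n.choose m := by
  refine Nat.le_of_mul_le_mul_right ?_ m.factorial_pos
  calc n ^ m * m.factorial = ∏ j ∈ range m, n * (m - j) := by
        rw [prod_mul_distrib, prod_const, card_range, ← Nat.descFactorial_eq_prod_range,
          Nat.descFactorial_self]
    _ ≤ ∏ j ∈ range m, m * (n - j) := by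
        refine prod_le_prod' fun j _ => ?_
        rw [Nat.mul_sub, Nat.mul_sub, mul_comm n m]
        exact Nat.sub_le_sub_left (Nat.mul_le_mul_right j hmn) _
    _ = m ^ m * n.choose m * m.factorial := by
        rw [prod_mul_distrib, prod_const, card_range, ← Nat.descFactorial_eq_prod_range,
          Nat.descFactorial_eq_factorial_mul_choose]
        ring

lemma pow_le_exp_one_pow_mul_factorial_mul_choose {m n : ℕ} (hmn : m ≤ n) :
    (n : ℝ) ^ m ≤ exp 1 ^ m * m.factorial * n.choose m :=
  calc (n : ℝ) ^ m ≤ m ^ m * n.choose m := by exact_mod_cast pow_le_pow_self_mul_choose hmn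
    _ ≤ exp 1 ^ m * m.factorial * n.choose m := by
        gcongr
        exact pow_self_le_exp_one_pow_mul_factorial m

end FactorialBounds

section WindowSum

variable {s : ℕ → ℝ} {p i N : ℕ} {τ R X : ℝ}

lemma choose_mul_abs_mul_pow_le {m : ℕ} {x : ℝ} (hx : 0 ≤ x) (hR : 0 ≤ R)
    (h : |s (p + m)| / √((p + m).factorial : ℝ) ≤ |s p| / √(p.factorial : ℝ) * x ^ m) :
    N.choose m * |s (p + m)| * R ^ m ≤
      |s p| * ((N * (R * x) * √((p + m : ℕ) : ℝ)) ^ m / m.factorial) := by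
  have habs : |s (p + m)| ≤ |s p| * (x * √((p + m : ℕ) : ℝ)) ^ m := by
    rw [div_le_iff₀ (by positivity)] at h
    calc |s (p + m)|
        ≤ |s p| / √(p.factorial : ℝ) * x ^ m * √((p + m).factorial : ℝ) := h
      _ ≤ |s p| / √(p.factorial : ℝ) * x ^ m *
            (√(p.factorial : ℝ) * √((p + m : ℕ) : ℝ) ^ m) := by
          gcongr
          exact sqrt_factorial_add_le p m
      _ = |s p| * (x * √((p + m : ℕ) : ℝ)) ^ m := by
          rw [mul_pow]
          field_simp
  calc N.choose m * |s (p + m)| * R ^ m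
      ≤ N.choose m * (|s p| * (x * √((p + m : ℕ) : ℝ)) ^ m) * R ^ m := by gcongr
    _ = |s p| * (N.choose m * (R * x * √((p + m : ℕ) : ℝ)) ^ m) := by
        simp only [mul_pow]
        ring
    _ ≤ |s p| * ((N * (R * x * √((p + m : ℕ) : ℝ))) ^ m / m.factorial) := by
        gcongr
        exact choose_mul_pow_le (by positivity) N m
    _ = _ := by rw [mul_assoc (N : ℝ)]

lemma sqrt_add_mul_le {m : ℕ} (him : i ≤ m) :
    √((p + m : ℕ) : ℝ) * i ≤ √(2 * (p + i)) * m := by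
  have h : (p + m) * i ^ 2 ≤ 2 * (p + i) * m ^ 2 := by
    have := Nat.mul_le_mul_left p (Nat.pow_le_pow_left him 2)
    have := Nat.mul_le_mul_left (m * i) him
    nlinarith
  refine le_of_sq_le_sq ?_ (by positivity)
  rw [mul_pow, mul_pow, sq_sqrt (by positivity), sq_sqrt (by positivity)]
  exact_mod_cast h

variable (hw : CriticalWindow (fun m => |s m| / √(m.factorial : ℝ)) p i N τ)

include hw

lemma CriticalWindow.start_ne_zero : s p ≠ 0 := by
  intro h
  simpa [h] using hw.start_pos

lemma CriticalWindow.factorial_mul_sq_le : N.factorial * (s p * τ ^ N) ^ 2 ≤ s (p + N) ^ 2 := by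
  have hfact : (N.factorial : ℝ) * p.factorial ≤ (p + N).factorial := by
    rw [mul_comm]
    exact_mod_cast Nat.le_of_dvd (Nat.factorial_pos _)
      (Nat.factorial_mul_factorial_dvd_factorial_add p N)
  have hlast : s (p + N) ^ 2 / (p + N).factorial = s p ^ 2 / p.factorial * (τ ^ N) ^ 2 := by
    have := congrArg (· ^ 2) hw.last_eq
    rwa [div_pow, mul_pow, div_pow, sq_abs, sq_abs, sq_sqrt (Nat.cast_nonneg _),
      sq_sqrt (Nat.cast_nonneg _)] at this
  calc N.factorial * (s p * τ ^ N) ^ 2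
      = s p ^ 2 / p.factorial * (τ ^ N) ^ 2 * (N.factorial * p.factorial) := by field_simp
    _ ≤ s p ^ 2 / p.factorial * (τ ^ N) ^ 2 * (p + N).factorial := by gcongr
    _ = s (p + N) ^ 2 := by
        rw [← hlast]
        field_simp

lemma CriticalWindow.abs_start_mul_exp_le_sum (hs : (jensenPoly s p N).Splits)
    (hX : N * (R * τ) * √(2 * (p + i)) = X) (hR : 0 < R) (hX1 : X ^ 2 ≤ 2 * exp 1 * (p + i) * N) :
    |s p| * exp (X ^ 2 / (8 * exp 1 * (p + i))) ≤
      ∑ m ∈ range (N + 1), N.choose m * |s (p + m)| * R ^ m := by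
  have hi : (0 : ℝ) < i := by exact_mod_cast hw.one_le_gap
  have hN : (0 : ℝ) < N := by
    have := hw.gap_add_two_le
    exact_mod_cast (by omega : 0 < N)
  have hτ := hw.ratio_pos
  have hsp := hw.start_ne_zero
  have hlast : s (p + N) ≠ 0 := by
    intro h
    have := hw.factorial_mul_sq_le
    rw [h, zero_pow two_ne_zero] at this
    exact this.not_gt (by positivity)
  have hXsq : X ^ 2 = N ^ 2 * (R * τ) ^ 2 * (2 * (p + i)) := by
    rw [← hX, mul_pow, mul_pow, sq_sqrt (by positivity)]
  set g := N * (R * τ) ^ 2 / exp 1 with hg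
  have hgX : g = X ^ 2 / (2 * exp 1 * (p + i) * N) := by
    rw [hXsq, hg]
    field_simp
  have hexponent : X ^ 2 / (8 * exp 1 * (p + i)) = N * g / 4 := by
    rw [hgX]
    field_simp
    ring
  rw [hexponent]
  refine abs_mul_exp_le_sum hs hsp hlast hR.le (by positivity)
    (hgX ▸ div_le_one_of_le₀ hX1 (by positivity)) ?_
  calc g ^ N * s p ^ 2 = N ^ N / exp 1 ^ N * (R ^ N) ^ 2 * (s p * τ ^ N) ^ 2 := by
        rw [hg, div_pow, mul_pow, ← pow_mul, mul_comm 2 N, pow_mul, mul_pow]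
        ring
    _ ≤ N.factorial * (R ^ N) ^ 2 * (s p * τ ^ N) ^ 2 := by
        gcongr
        exact div_le_of_le_mul₀ (by positivity) (by positivity)
          (mul_comm (exp 1 ^ N) _ ▸ pow_self_le_exp_one_pow_mul_factorial N)
    _ ≤ (s (p + N) * R ^ N) ^ 2 := by
        rw [mul_pow (s (p + N)), mul_right_comm]
        gcongr
        exact hw.factorial_mul_sq_le

lemma CriticalWindow.sum_head_le (hX : N * (R * τ) * √(2 * (p + i)) = X) (hR : 0 < R) :
    ∑ m ∈ range (i + 2), N.choose m * |s (p + m)| * R ^ m ≤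
      |s p| * exp (X * decay (p + i) i) := by
  have hτ := hw.ratio_pos
  have hdecay : 0 < decay (p + i) i := exp_pos _
  have hX0 : 0 ≤ X := hX ▸ by positivity
  refine le_trans (sum_le_sum fun m hm => ?_) <| (mul_sum _ _ _).symm.trans_le <|
    mul_le_mul_of_nonneg_left
      (sum_le_exp_of_nonneg (x := X * decay (p + i) i) (by positivity) (i + 2)) (abs_nonneg _)
  have hm : m ≤ i + 1 := by simpa [Nat.lt_succ_iff] using hm
  have hsqrt : √((p + m : ℕ) : ℝ) ≤ √(2 * (p + i)) := by
    have := hw.one_le_gap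
    exact sqrt_le_sqrt (by exact_mod_cast (show p + m ≤ 2 * (p + i) by omega))
  refine (choose_mul_abs_mul_pow_le (by positivity) hR.le (hw.head_le m hm)).trans ?_
  have hbase : N * (R * (decay (p + i) i * τ)) * √((p + m : ℕ) : ℝ) ≤ X * decay (p + i) i :=
    calc N * (R * (decay (p + i) i * τ)) * √((p + m : ℕ) : ℝ)
        ≤ N * (R * (decay (p + i) i * τ)) * √(2 * (p + i)) := by gcongr
      _ = X * decay (p + i) i := by rw [← hX]; ring
  gcongr

lemma CriticalWindow.tail_term_le (hX : N * (R * τ) * √(2 * (p + i)) = X) (hR : 0 < R) {m : ℕ}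
    (him : i + 2 ≤ m) (hmN : m ≤ N) :
    N.choose m * |s (p + m)| * R ^ m ≤ |s p| * (exp 1 * X / i) ^ m := by
  have hτ := hw.ratio_pos
  have hi : (0 : ℝ) < i := by exact_mod_cast hw.one_le_gap
  have hX0 : 0 ≤ X := hX ▸ by positivity
  have hbase : N * (R * τ) * √((p + m : ℕ) : ℝ) ≤ exp 1 * X / i * (m / exp 1) :=
    calc N * (R * τ) * √((p + m : ℕ) : ℝ)
        ≤ N * (R * τ) * (√(2 * (p + i)) * m / i) := by
          gcongr
          rw [le_div_iff₀ hi]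
          exact sqrt_add_mul_le (by omega)
      _ = exp 1 * X / i * (m / exp 1) := by
          rw [← hX]
          field_simp
  refine (choose_mul_abs_mul_pow_le hτ.le hR.le (hw.tail_le m him hmN)).trans ?_
  refine mul_le_mul_of_nonneg_left ?_ (abs_nonneg _)
  calc (N * (R * τ) * √((p + m : ℕ) : ℝ)) ^ m / m.factorial
      ≤ (exp 1 * X / i * (m / exp 1)) ^ m / m.factorial := by gcongr
    _ = (exp 1 * X / i) ^ m * (m ^ m / (exp 1 ^ m * m.factorial)) := by
        rw [mul_pow, div_pow (m : ℝ), mul_div_assoc, div_div]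
    _ ≤ (exp 1 * X / i) ^ m := mul_le_of_le_one_right (by positivity)
        (div_le_one_of_le₀ (pow_self_le_exp_one_pow_mul_factorial m) (by positivity))

lemma CriticalWindow.sum_tail_le (hX : N * (R * τ) * √(2 * (p + i)) = X) (hR : 0 < R)
    (hX1 : exp 1 * X / i ≤ 1 / 2) :
    ∑ m ∈ Ico (i + 2) (N + 1), N.choose m * |s (p + m)| * R ^ m ≤
      |s p| * (2 * (exp 1 * X / i) ^ (i + 2)) := by
  have hτ := hw.ratio_pos
  have hρ : 0 ≤ exp 1 * X / i := by
    rw [← hX]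
    positivity
  calc ∑ m ∈ Ico (i + 2) (N + 1), N.choose m * |s (p + m)| * R ^ m
      ≤ ∑ m ∈ Ico (i + 2) (N + 1), |s p| * (exp 1 * X / i) ^ m := by
        refine sum_le_sum fun m hm => ?_
        obtain ⟨him, hmN⟩ := mem_Ico.1 hm
        exact hw.tail_term_le hX hR him (Nat.lt_succ_iff.1 hmN)
    _ ≤ |s p| * ((exp 1 * X / i) ^ (i + 2) / (1 - exp 1 * X / i)) := by
        rw [← mul_sum]
        gcongr
        exact geom_sum_Ico_le_of_lt_one hρ (by linarith)
    _ ≤ |s p| * (2 * (exp 1 * X / i) ^ (i + 2)) := by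
        gcongr
        rw [div_le_iff₀ (by linarith)]
        nlinarith [pow_nonneg hρ (i + 2)]

end WindowSum

section Contradiction

/-- The size of `N * R * τ * √(2 * k)`, where `R` is the distance from the origin at which the
Jensen polynomial of a critical window with gap `i` below `k` is evaluated: small enough for the
terms after the gap to decay geometrically, and large enough to make `decay k i` negligible. -/
noncomputable def radius (k i : ℝ) : ℝ := i * exp (-√(k / i)) / 4096

lemma radius_pos {k i : ℝ} (hi : 0 < i) : 0 < radius k i := by
  rw [radius]
  positivity

lemma radius_le {k i : ℝ} (hi : 0 ≤ i) : radius k i ≤ i / 4096 := by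
  rw [radius]
  gcongr
  exact mul_le_of_le_one_right hi (exp_le_one_iff.2 (neg_nonpos.2 (sqrt_nonneg _)))

lemma mul_decay_le_radius {k i : ℝ} (hi : 0 < i) (hik : i ≤ k) :
    16 * exp 1 * k * decay k i ≤ radius k i := by
  rw [decay, radius]
  set z := √(k / i)
  have hk : k = z ^ 2 * i := by
    rw [sq_sqrt (div_nonneg (hi.le.trans hik) hi.le), div_mul_cancel₀ _ hi.ne']
  have hz : 1 ≤ z := one_le_sqrt.2 ((one_le_div hi).2 hik)
  have hsq : z ^ 2 ≤ exp z ^ 2 := by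
    gcongr
    linarith [add_one_le_exp z]
  have htwo : (2 : ℝ) ^ 16 ≤ exp 1 ^ 16 := by
    gcongr
    linarith [exp_one_gt_d9]
  have hexp : 2 ^ 16 * exp 1 * z ^ 2 * exp (-20 * z) ≤ exp (-z) :=
    calc 2 ^ 16 * exp 1 * z ^ 2 * exp (-20 * z)
        ≤ exp 1 ^ 16 * exp 1 * exp z ^ 2 * exp (-20 * z) := by gcongr
      _ = exp (17 - 18 * z) := by
          simp only [← exp_nat_mul, ← exp_add]
          ring_nf
      _ ≤ exp (-z) := exp_le_exp.2 (by linarith)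
  rw [hk]
  linarith [mul_le_mul_of_nonneg_left hexp hi.le]

lemma mul_exp_neg_sqrt_div_mul_le {k i : ℝ} (hk : 0 ≤ k) (hi : 1 ≤ i) :
    k * exp (-(√(k / i) * i)) ≤ 2 := by
  have hsq : k ≤ (√(k / i) * i) ^ 2 := by
    rw [mul_pow, sq_sqrt (by positivity), sq i, ← mul_assoc, div_mul_cancel₀ _ (by positivity)]
    exact le_mul_of_one_le_right hk hi
  have hw : 0 ≤ √(k / i) * i := by positivity
  rw [exp_neg, ← div_eq_mul_inv, div_le_iff₀ (exp_pos _)]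
  linarith [quadratic_le_exp_of_nonneg hw]

lemma two_mul_pow_lt_radius_sq_div {k : ℝ} (hk : 0 < k) {i : ℕ} (hi : 1 ≤ i) :
    2 * (exp 1 * radius k i / i) ^ (i + 2) < radius k i ^ 2 / (16 * exp 1 * k) := by
  have hi1 : (1 : ℝ) ≤ i := by exact_mod_cast hi
  have he := exp_one_lt_d9
  have hr : 0 < radius k i := radius_pos (by positivity)
  have hpow : (exp 1 * radius k i / i) ^ i ≤ exp 1 / 4096 * exp (-(√(k / i) * i)) := by
    have hbase : exp 1 * radius k i / i = exp 1 / 4096 * exp (-√(k / i)) := by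
      rw [radius]
      field_simp
    rw [hbase, mul_pow, ← exp_nat_mul, mul_neg, mul_comm (i : ℝ)]
    gcongr
    exact pow_le_of_le_one (by positivity) (by linarith) (by omega)
  have hsq : (exp 1 * radius k i / i) ^ 2 ≤ exp 1 ^ 2 * radius k i ^ 2 := by
    rw [← mul_pow]
    gcongr
    exact div_le_self (by positivity) hi1
  have hconst : exp 1 ^ 4 < 64 :=
    (pow_lt_pow_left₀ he (exp_pos _).le (by norm_num)).trans (by norm_num)
  rw [lt_div_iff₀ (by positivity), pow_add]
  calc 2 * ((exp 1 * radius k i / i) ^ i * (exp 1 * radius k i / i) ^ 2) * (16 * exp 1 * k)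
      ≤ 2 * (exp 1 / 4096 * exp (-(√(k / i) * i)) * (exp 1 ^ 2 * radius k i ^ 2)) *
          (16 * exp 1 * k) := by gcongr
    _ = exp 1 ^ 4 / 128 * (k * exp (-(√(k / i) * i))) * radius k i ^ 2 := by ring
    _ ≤ exp 1 ^ 4 / 128 * 2 * radius k i ^ 2 := by
        gcongr
        exact mul_exp_neg_sqrt_div_mul_le hk.le hi1
    _ < radius k i ^ 2 := mul_lt_of_lt_one_left (by positivity) (by linarith)

lemma exp_add_lt_exp {x t v : ℝ} (hv : 0 ≤ v) (hx : x ≤ v / 2) (ht : t < v / 2) :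
    exp x + t < exp v :=
  calc exp x + t < exp (v / 2) + v / 2 := add_lt_add_of_le_of_lt (exp_le_exp.2 hx) ht
    _ ≤ exp (v / 2) * exp (v / 2) := by
        nlinarith [add_one_le_exp (v / 2), one_le_exp (by linarith : 0 ≤ v / 2)]
    _ = exp v := by rw [← exp_add, add_halves]

theorem not_criticalWindow {s : ℕ → ℝ} {p i N : ℕ} {τ : ℝ} (hs : (jensenPoly s p N).Splits) :
    ¬ CriticalWindow (fun m => |s m| / √(m.factorial : ℝ)) p i N τ := by
  intro hw
  have hi : (1 : ℝ) ≤ i := by exact_mod_cast hw.one_le_gap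
  have hiN : (i : ℝ) ≤ N := by
    have := hw.gap_add_two_le
    exact_mod_cast (by omega : i ≤ N)
  have hN : (0 : ℝ) < N := by linarith
  have hτ := hw.ratio_pos
  have hik : (i : ℝ) ≤ p + i := le_add_of_nonneg_left p.cast_nonneg
  have hdecay := mul_decay_le_radius (by positivity) hik
  have hsmall := two_mul_pow_lt_radius_sq_div (k := p + i) (by positivity) hw.one_le_gap
  have hXpos : 0 < radius (p + i) i := radius_pos (by positivity)
  have hXi : radius (p + i) i ≤ i / 4096 := radius_le (by positivity)
  have he_lt := exp_one_lt_d9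
  have he_gt := exp_one_gt_d9
  set X := radius (p + i) i
  obtain ⟨R, hR, hX⟩ : ∃ R > 0, N * (R * τ) * √(2 * (p + i)) = X :=
    ⟨X / (N * τ * √(2 * (p + i))), by positivity, by field_simp⟩
  have hXsq : X ^ 2 ≤ 2 * exp 1 * (p + i) * N := by
    nlinarith [mul_le_mul hik hiN (by positivity) (by positivity)]
  have hρ : exp 1 * X / i ≤ 1 / 2 := by
    rw [div_le_iff₀ (by positivity)]
    nlinarith
  have hhead : X * decay (p + i) i ≤ X ^ 2 / (8 * exp 1 * (p + i)) / 2 := by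
    rw [div_div, le_div_iff₀ (by positivity)]
    nlinarith
  have hexp := exp_add_lt_exp (by positivity) hhead (hsmall.trans_eq (by field_simp; norm_num))
  have hsum := hw.abs_start_mul_exp_le_sum hs hX hR hXsq
  rw [← sum_range_add_sum_Ico _ (show i + 2 ≤ N + 1 by linarith [hw.gap_add_two_le])] at hsum
  have := mul_lt_mul_of_pos_left hexp (abs_pos.2 hw.start_ne_zero)
  linarith [hw.sum_head_le hX hR, hw.sum_tail_le hX hR hρ]

lemma abs_div_sqrt_le_iff {a x c : ℝ} (hx : 0 < x) (hc : 0 ≤ c) :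
    |a| / √x ≤ c ↔ a ^ 2 ≤ c ^ 2 * x := by
  rw [div_le_iff₀ (sqrt_pos.2 hx), ← sq_le_sq₀ (abs_nonneg a) (by positivity), sq_abs, mul_pow,
    sq_sqrt hx.le]

theorem sq_le_of_splits_jensenPoly {s : ℕ → ℝ} {n k l : ℕ} (hs : (jensenPoly s 0 n).Splits)
    (hs0 : s 0 = 1) (hk : 1 ≤ k) (hsk : s k ^ 2 ≤ k.factorial)
    (hsk1 : s (k + 1) ^ 2 ≤ (k + 1).factorial) (hkl : k ≤ l) (hln : l ≤ n) :
    s l ^ 2 ≤ (exp 40 ^ l) ^ 2 * l.factorial := by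
  have hfact (m : ℕ) : (0 : ℝ) < m.factorial := by exact_mod_cast m.factorial_pos
  set b : ℕ → ℝ := fun m => |s m| / √(m.factorial : ℝ) with hb
  have hbk : b k ≤ 1 := (abs_div_sqrt_le_iff (hfact k) zero_le_one).2 (by simpa using hsk)
  have hbk1 : b (k + 1) ≤ 1 :=
    (abs_div_sqrt_le_iff (hfact (k + 1)) zero_le_one).2 (by simpa using hsk1)
  have hone : 1 ≤ exp 40 ^ l := one_le_pow₀ (one_le_exp (by norm_num))
  refine (abs_div_sqrt_le_iff (hfact l) (by positivity)).1 ?_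
  obtain rfl | rfl | hkl2 : l = k ∨ l = k + 1 ∨ k + 2 ≤ l := by omega
  · exact hbk.trans hone
  · exact hbk1.trans hone
  · by_contra! hlarge
    obtain ⟨p, i, N, τ, hpN, hw⟩ := exists_criticalWindow (b := b)
      (fun m => by positivity) (by simp [hb, hs0]) hk hbk hbk1 hkl2 hln hlarge
    exact not_criticalWindow (splits_jensenPoly_of_le hs hpN) hw

end Contradiction

section Scaling

variable {n m : ℕ} {y : Fin n → ℝ} {θ : ℝ}

lemma esymmS_smul (c : ℝ) : esymmS n m (c • y) = c ^ m * esymmS n m y := by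
  rw [esymmS, esymmS, mul_sum]
  refine sum_congr rfl fun A hA => ?_
  simp only [Pi.smul_apply, smul_eq_mul, prod_mul_distrib, prod_const]
  rw [(mem_powersetCard.1 hA).2]

lemma smean_zero_right (n : ℕ) (y : Fin n → ℝ) : smean n 0 y = 1 := by
  simp [smean, esymmS]

lemma smean_smul_sq (hθ : 0 ≤ θ) :
    smean n m ((n / (exp 1 * √θ)) • y) ^ 2 =
      (n ^ m / (exp 1 ^ m * n.choose m)) ^ 2 * (|esymmS n m y| ^ 2 / θ ^ m) := by
  have hsqrt : (√θ ^ m) ^ 2 = θ ^ m := by rw [pow_right_comm, sq_sqrt hθ]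
  rw [smean, esymmS_smul, sq_abs, ← hsqrt]
  simp only [div_pow, mul_pow]
  ring

lemma smean_smul_sq_le_factorial (hmn : m ≤ n) (hθ : 0 < θ)
    (h : |esymmS n m y| ^ 2 ≤ θ ^ m / m.factorial) :
    smean n m ((n / (exp 1 * √θ)) • y) ^ 2 ≤ m.factorial := by
  have hchoose : (0 : ℝ) < n.choose m := by exact_mod_cast Nat.choose_pos hmn
  have hscale : n ^ m / (exp 1 ^ m * n.choose m) ≤ (m.factorial : ℝ) := by
    rw [div_le_iff₀ (by positivity)]
    linarith [pow_le_exp_one_pow_mul_factorial_mul_choose hmn]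
  rw [smean_smul_sq hθ.le]
  calc ((n : ℝ) ^ m / (exp 1 ^ m * n.choose m)) ^ 2 * (|esymmS n m y| ^ 2 / θ ^ m)
      ≤ (m.factorial : ℝ) ^ 2 * (θ ^ m / m.factorial / θ ^ m) := by gcongr
    _ = (m.factorial : ℝ) := by field_simp

lemma abs_esymmS_sq_le_of_smean_smul_sq_le {E : ℝ} (hmn : m ≤ n) (hθ : 0 < θ)
    (h : smean n m ((n / (exp 1 * √θ)) • y) ^ 2 ≤ (E ^ m) ^ 2 * m.factorial) :
    |esymmS n m y| ^ 2 ≤ ((E * exp 1) ^ 2 * θ) ^ m / m.factorial := by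
  have hchoose : (0 : ℝ) < n.choose m := by exact_mod_cast Nat.choose_pos hmn
  have hscale : m.factorial / exp 1 ^ m ≤ n ^ m / (exp 1 ^ m * n.choose m) := by
    rw [div_le_div_iff₀ (by positivity) (by positivity)]
    have := (le_div_iff₀ (by positivity)).1 (Nat.choose_le_pow_div (α := ℝ) m n)
    nlinarith [pow_pos (exp_pos 1) m]
  rw [smean_smul_sq hθ.le] at h
  have hmul : (m.factorial / exp 1 ^ m) ^ 2 * (|esymmS n m y| ^ 2 / θ ^ m) ≤
      (E ^ m) ^ 2 * m.factorial := le_trans (by gcongr) h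
  calc |esymmS n m y| ^ 2
      = (m.factorial / exp 1 ^ m) ^ 2 * (|esymmS n m y| ^ 2 / θ ^ m) *
          ((exp 1 ^ m) ^ 2 * θ ^ m / (m.factorial : ℝ) ^ 2) := by field_simp
    _ ≤ (E ^ m) ^ 2 * m.factorial * ((exp 1 ^ m) ^ 2 * θ ^ m / (m.factorial : ℝ) ^ 2) := by gcongr
    _ = ((E * exp 1) ^ 2 * θ) ^ m / m.factorial := by
        rw [mul_pow _ θ, pow_right_comm E, pow_right_comm (exp 1), mul_pow E, mul_pow]
        field_simp

end Scaling

end LeeInequality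

theorem lee_form_inequality :
    ∃ C : ℝ, 0 < C ∧ ∀ (n : ℕ), 1 ≤ n → ∀ (y : Fin n → ℝ) (k : ℕ),
      1 ≤ k → k < n → ∀ θ : ℝ, 0 < θ →
      |esymmS n k y| ^ 2 ≤ θ ^ k / (Nat.factorial k : ℝ) →
      |esymmS n (k + 1) y| ^ 2 ≤ θ ^ (k + 1) / (Nat.factorial (k + 1) : ℝ) →
      ∀ ℓ : ℕ, k ≤ ℓ → ℓ ≤ n →
        |esymmS n ℓ y| ^ 2 ≤ (C * θ) ^ ℓ / (Nat.factorial ℓ : ℝ) := by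
  refine ⟨(exp 40 * exp 1) ^ 2, by positivity, ?_⟩
  intro n _ y k hk hkn θ hθ hSk hSk1 ℓ hkℓ hℓn
  refine LeeInequality.abs_esymmS_sq_le_of_smean_smul_sq_le hℓn hθ ?_
  exact LeeInequality.sq_le_of_splits_jensenPoly (LeeInequality.splits_jensenPoly_smean n _)
    (LeeInequality.smean_zero_right n _) hk
    (LeeInequality.smean_smul_sq_le_factorial hkn.le hθ hSk)
    (LeeInequality.smean_smul_sq_le_factorial hkn hθ hSk1) hkℓ hℓn
end

section
/- Let n ≥ 1, let y_1, …, y_n be real numbers with |y_1 ⋯ y_n| = 1, and let r > 0 be real. Then ∏_{j=1}^{n} (y_j^2 + r^2) ≥ (1 + r^2)^n. -/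
open Finset Real

/-!
The geometric mean is superadditive: by the weighted AM-GM inequality the geometric mean of the
fractions `a i / (a i + b i)` plus that of `b i / (a i + b i)` is at most `1`, and multiplying by
the geometric mean of `a + b` clears the denominators. For `a i = y i ^ 2` and `b i = r ^ 2` this
is Jensen's inequality for the convex function `t ↦ log (exp t + r ^ 2)`, with no logarithm of
`y i` to exclude `y i = 0`.
-/

section GeomMean

variable {ι : Type*} {s : Finset ι}

theorem prod_rpow_le_sum_mul_div_mul_prod_rpow {w a c : ι → ℝ} (hw : ∀ i ∈ s, 0 ≤ w i)
    (hw_sum : ∑ i ∈ s, w i = 1) (ha : ∀ i ∈ s, 0 ≤ a i) (hc : ∀ i ∈ s, 0 ≤ c i)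
    (hac : ∀ i ∈ s, c i = 0 → a i = 0) :
    ∏ i ∈ s, a i ^ w i ≤ (∑ i ∈ s, w i * (a i / c i)) * ∏ i ∈ s, c i ^ w i := by
  have hdiv : ∀ i ∈ s, 0 ≤ a i / c i := fun i hi => div_nonneg (ha i hi) (hc i hi)
  calc
    ∏ i ∈ s, a i ^ w i = (∏ i ∈ s, (a i / c i) ^ w i) * ∏ i ∈ s, c i ^ w i := by
      rw [← prod_mul_distrib]
      refine prod_congr rfl fun i hi => ?_
      rw [← mul_rpow (hdiv i hi) (hc i hi), div_mul_cancel_of_imp (hac i hi)]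
    _ ≤ (∑ i ∈ s, w i * (a i / c i)) * ∏ i ∈ s, c i ^ w i :=
      mul_le_mul_of_nonneg_right (geom_mean_le_arith_mean_weighted s w _ hw hw_sum hdiv)
        (prod_nonneg fun i hi => rpow_nonneg (hc i hi) _)

theorem prod_rpow_add_prod_rpow_le_prod_add_rpow {w a b : ι → ℝ} (hw : ∀ i ∈ s, 0 ≤ w i)
    (hw_sum : ∑ i ∈ s, w i = 1) (ha : ∀ i ∈ s, 0 ≤ a i) (hb : ∀ i ∈ s, 0 ≤ b i) :
    ∏ i ∈ s, a i ^ w i + ∏ i ∈ s, b i ^ w i ≤ ∏ i ∈ s, (a i + b i) ^ w i := by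
  have hab : ∀ i ∈ s, 0 ≤ a i + b i := fun i hi => add_nonneg (ha i hi) (hb i hi)
  have hzero : ∀ i ∈ s, a i + b i = 0 → a i = 0 ∧ b i = 0 := fun i hi =>
    (add_eq_zero_iff_of_nonneg (ha i hi) (hb i hi)).mp
  have hfractions :
      ∑ i ∈ s, w i * (a i / (a i + b i)) + ∑ i ∈ s, w i * (b i / (a i + b i)) ≤ 1 := by
    rw [← sum_add_distrib, ← hw_sum]
    refine sum_le_sum fun i hi => ?_
    rw [← mul_add, ← add_div]
    -- Only `≤`: the quotient is `0 / 0 = 0` where `a i` and `b i` both vanish.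
    exact mul_le_of_le_one_right (hw i hi) (div_self_le_one _)
  calc
    ∏ i ∈ s, a i ^ w i + ∏ i ∈ s, b i ^ w i
      ≤ (∑ i ∈ s, w i * (a i / (a i + b i))) * ∏ i ∈ s, (a i + b i) ^ w i
          + (∑ i ∈ s, w i * (b i / (a i + b i))) * ∏ i ∈ s, (a i + b i) ^ w i :=
      add_le_add
        (prod_rpow_le_sum_mul_div_mul_prod_rpow hw hw_sum ha hab fun i hi h => (hzero i hi h).1)
        (prod_rpow_le_sum_mul_div_mul_prod_rpow hw hw_sum hb hab fun i hi h => (hzero i hi h).2)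
    _ ≤ ∏ i ∈ s, (a i + b i) ^ w i := by
      rw [← add_mul]
      exact mul_le_of_le_one_left (prod_nonneg fun i hi => rpow_nonneg (hab i hi) _) hfractions

theorem prod_rpow_inv_card_add_pow_card_le_prod_add (hs : s.Nonempty) {a b : ι → ℝ}
    (ha : ∀ i ∈ s, 0 ≤ a i) (hb : ∀ i ∈ s, 0 ≤ b i) :
    ((∏ i ∈ s, a i) ^ (#s : ℝ)⁻¹ + (∏ i ∈ s, b i) ^ (#s : ℝ)⁻¹) ^ #s
      ≤ ∏ i ∈ s, (a i + b i) := by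
  have hab : ∀ i ∈ s, 0 ≤ a i + b i := fun i hi => add_nonneg (ha i hi) (hb i hi)
  have hcard : (#s : ℝ) ≠ 0 := Nat.cast_ne_zero.mpr hs.card_ne_zero
  have hroots : (∏ i ∈ s, a i) ^ (#s : ℝ)⁻¹ + (∏ i ∈ s, b i) ^ (#s : ℝ)⁻¹
      ≤ (∏ i ∈ s, (a i + b i)) ^ (#s : ℝ)⁻¹ := by
    rw [← finsetProd_rpow s a ha, ← finsetProd_rpow s b hb, ← finsetProd_rpow s _ hab]
    refine prod_rpow_add_prod_rpow_le_prod_add_rpow (fun _ _ => by positivity) ?_ ha hb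
    rw [sum_const, nsmul_eq_mul, mul_inv_cancel₀ hcard]
  calc
    ((∏ i ∈ s, a i) ^ (#s : ℝ)⁻¹ + (∏ i ∈ s, b i) ^ (#s : ℝ)⁻¹) ^ #s
      ≤ ((∏ i ∈ s, (a i + b i)) ^ (#s : ℝ)⁻¹) ^ #s :=
      pow_le_pow_left₀
        (add_nonneg (rpow_nonneg (prod_nonneg ha) _) (rpow_nonneg (prod_nonneg hb) _)) hroots _
    _ = ∏ i ∈ s, (a i + b i) := rpow_inv_natCast_pow (prod_nonneg hab) hs.card_ne_zero

theorem jensen_step_general (hs : s.Nonempty) (y : ι → ℝ) (r : ℝ) :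
    (|∏ i ∈ s, y i| ^ (2 / #s : ℝ) + r ^ 2) ^ #s ≤ ∏ i ∈ s, (y i ^ 2 + r ^ 2) := by
  have hy_root : |∏ i ∈ s, y i| ^ (2 / #s : ℝ) = (∏ i ∈ s, y i ^ 2) ^ (#s : ℝ)⁻¹ := by
    rw [div_eq_mul_inv, rpow_mul (abs_nonneg _), rpow_two, sq_abs, prod_pow]
  have hr_root : r ^ 2 = (∏ _i ∈ s, r ^ 2) ^ (#s : ℝ)⁻¹ := by
    rw [prod_const, pow_rpow_inv_natCast (sq_nonneg r) hs.card_ne_zero]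
  calc
    (|∏ i ∈ s, y i| ^ (2 / #s : ℝ) + r ^ 2) ^ #s
      = ((∏ i ∈ s, y i ^ 2) ^ (#s : ℝ)⁻¹ + (∏ _i ∈ s, r ^ 2) ^ (#s : ℝ)⁻¹) ^ #s := by
      rw [hy_root, ← hr_root]
    _ ≤ ∏ i ∈ s, (y i ^ 2 + r ^ 2) :=
      prod_rpow_inv_card_add_pow_card_le_prod_add hs (fun i _ => sq_nonneg (y i))
        fun _ _ => sq_nonneg r

end GeomMean

theorem jensen_step (n : ℕ) (hn : 1 ≤ n) (y : Fin n → ℝ) (hy : |∏ i, y i| = 1)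
    (r : ℝ) (hr : 0 < r) :
    ∏ i, (y i ^ 2 + r ^ 2) ≥ (1 + r ^ 2) ^ n := by
  have hne : (univ : Finset (Fin n)).Nonempty := ⟨⟨0, hn⟩, mem_univ _⟩
  simpa only [hy, one_rpow, card_fin] using jensen_step_general hne y r
end
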